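/- arXiv:1903.04335 — 2 statements merged into one kernel-verified Lean document; each statement's English description precedes it below -/
import Mathlib

section
/- Let K = ⋃_{ℓ=1}^L [a_ℓ, b_ℓ] ⊆ [−1,1] with −1 = a_1 < b_1 < a_2 < b_2 < ⋯ < a_L < b_L = 1, let Σ and Ω be real polynomials that are strictly positive on each [a_ℓ, b_ℓ], let w = Σ/Ω, let N ≥ 1 and M = max(deg Σ, deg Ω + N). For a real polynomial P of degree at most N and c ∈ ℝ, the following are equivalent: (i) |Ω(x)P(x)/Σ(x)| ≤ c for all x ∈ K; (ii) for each ℓ = 1,…,L and each choice of sign ±, the polynomial c·Σ ± Ω·P (of degree ≤ M) is nonnegative on [a_ℓ, b_ℓ], i.e. there exist Hermitian positive semidefinite matrices Q^{±,ℓ} ∈ ℂ^{(M+1)×(M+1)} and R^{±,ℓ} ∈ ℂ^{M×M} satisfying, for m = 0,…,M, Σ_{i−j=m} Q^{±,ℓ}_{i,j} + α_ℓ Σ_{i−j=m−1} R^{±,ℓ}_{i,j} − β_ℓ Σ_{i−j=m} R^{±,ℓ}_{i,j} + conj(α_ℓ) Σ_{i−j=m+1} R^{±,ℓ}_{i,j}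 = (1/2)σ_m c ± (1/2)(ΩP)-coefficient_m for m ≥ 1 and = σ_0 c ± (ΩP)-coefficient_0 for m = 0, where α_ℓ = (1/2)exp(i(arccos(a_ℓ)+arccos(b_ℓ))/2), β_ℓ = cos((arccos(a_ℓ)−arccos(b_ℓ))/2), Σ = Σ_m σ_m T_m and ΩP = Σ_m (ΩP)-coefficient_m · T_m are Chebyshev expansions. Consequently, the minimum value of c over all (c, P) with P monic of degree N satisfying these semidefinite constraints equals min{ ‖P/w‖_K : P monic of degree N }, where ‖·‖_K is the sup norm on K. -/
open scoped ComplexOrder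

/-- Feasibility of the semidefinite certificate for nonnegativity of a polynomial
`∑ m, r m • T m` on an interval, with data `α ∈ ℂ`, `β ∈ ℝ`. -/
def SdpCert (M : ℕ) (α : ℂ) (β : ℝ) (r : Fin (M + 1) → ℝ) : Prop :=
  ∃ (Q : Matrix (Fin (M + 1)) (Fin (M + 1)) ℂ) (R : Matrix (Fin M) (Fin M) ℂ),
    Q.PosSemidef ∧ R.PosSemidef ∧
    ∀ m : Fin (M + 1),
      (∑ p ∈ Finset.univ.filter
          (fun p : Fin (M + 1) × Fin (M + 1) => ((p.1 : ℕ) : ℤ) - ((p.2 : ℕ) : ℤ) = (m : ℕ)),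
          Q p.1 p.2)
        + α * (∑ p ∈ Finset.univ.filter
            (fun p : Fin M × Fin M => ((p.1 : ℕ) : ℤ) - ((p.2 : ℕ) : ℤ) = ((m : ℕ) : ℤ) - 1),
            R p.1 p.2)
        - (β : ℂ) * (∑ p ∈ Finset.univ.filter
            (fun p : Fin M × Fin M => ((p.1 : ℕ) : ℤ) - ((p.2 : ℕ) : ℤ) = (m : ℕ)),
            R p.1 p.2)
        + (starRingEnd ℂ) α * (∑ p ∈ Finset.univ.filter
            (fun p : Fin M × Fin M => ((p.1 : ℕ) : ℤ) - ((p.2 : ℕ) : ℤ) = ((m : ℕ) : ℤ) + 1),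
            R p.1 p.2)
      = if m = 0 then ((r m : ℝ) : ℂ) else ((r m : ℝ) : ℂ) / 2

/-!
Through `z = exp (θ I)`, `x = cos θ`, the polynomial `∑ m, r m T_m` on `[a, b]` becomes a
trigonometric polynomial on the arc `cos δ ≤ re (η z)` of the unit circle, whose centre `conj η` and
half-width `δ` are given by the mean and half-difference of `arccos a` and `arccos b`; the weight
`re (η z) - cos δ` is `α z - β + conj α z⁻¹`. With `ω = exp (δ I)`, the Möbius map
`s ↦ (1 + s ω) / (s + ω)` sends the half line `[0, ∞)` onto the arc `cos δ ≤ re w` without the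
point `ω`, and `re w - cos δ` pulls back to a positive multiple of `s / |s + ω|²`.

A real polynomial nonnegative on `[0, ∞)` has the form `|p s|² + s |q s|²`: write `f (t²)` as
`|r t|²` and separate the even and odd parts of `r`. Transported to the arc, this expresses a
nonnegative trigonometric polynomial as `|q₀ z|² + (re (η z) - cos δ) |q₁ z|²`, and the coefficient
vectors of `q₀`, `q₁` give rank-one matrices `Q`, `R`. An identity of Laurent polynomials that holds
at infinitely many points of the circle holds coefficientwise, which is the certificate; conversely
the certificate is such an identity, and both of its summands are nonnegative on the arc.

For the extremal values, the certified `c` are exactly the upper bounds of the sup norms, so both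
sets have the same infimum.
-/

open Polynomial ComplexConjugate
open scoped LaurentPolynomial Matrix Real

/-! ### Polynomials nonnegative on the half line -/

theorem exists_quadratic_dvd_of_nonneg {f : ℝ[X]} (hf : ∀ t, 0 ≤ f.eval t)
    (hdeg : f.degree ≠ 0) : ∃ z : ℂ, X ^ 2 - C (2 * z.re) * X + C (‖z‖ ^ 2) ∣ f := by
  obtain ⟨z, hz⟩ := IsAlgClosed.exists_aeval_eq_zero ℂ f hdeg
  by_cases hz0 : z.im = 0
  · obtain ⟨x, rfl⟩ : ∃ x : ℝ, (x : ℂ) = z := ⟨z.re, Complex.ext rfl hz0.symm⟩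
    have hroot : f.IsRoot x := by
      simpa [aeval_algebraMap_apply] using (aeval_algebraMap_apply ℂ x f).symm.trans hz
    have hmin : IsLocalMin (fun t => f.eval t) x :=
      Filter.Eventually.of_forall fun t => hroot.eq_zero.le.trans (hf t)
    have hderiv : f.derivative.IsRoot x := by
      rw [IsRoot.def, ← Polynomial.deriv]
      exact hmin.deriv_eq_zero
    have hsq : X ^ 2 - C (2 * (x : ℂ).re) * X + C (‖(x : ℂ)‖ ^ 2) = (X - C x) ^ 2 := by
      simp only [Complex.ofReal_re, Complex.norm_real, Real.norm_eq_abs, sq_abs, map_mul, map_pow,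
        map_ofNat]
      ring
    refine ⟨x, hsq ▸ ?_⟩
    rcases eq_or_ne f 0 with rfl | hf0
    · exact dvd_zero _
    · exact (le_rootMultiplicity_iff hf0).1
        ((one_lt_rootMultiplicity_iff_isRoot hf0).2 ⟨hroot, hderiv⟩)
  · exact ⟨z, f.quadratic_dvd_of_aeval_eq_zero_im_ne_zero hz hz0⟩

theorem eval_nonneg_of_forall_ne {f : ℝ[X]} {x : ℝ} (h : ∀ t, t ≠ x → 0 ≤ f.eval t) (t : ℝ) :
    0 ≤ f.eval t := by
  have hclosed : IsClosed {t : ℝ | 0 ≤ f.eval t} := isClosed_le continuous_const f.continuous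
  have hsub : closure ({x}ᶜ : Set ℝ) ⊆ {t | 0 ≤ f.eval t} := closure_minimal h hclosed
  rw [(dense_compl_singleton x).closure_eq] at hsub
  exact hsub (Set.mem_univ t)

theorem eval_quadratic_eq_norm_sq (z : ℂ) (t : ℝ) :
    (X ^ 2 - C (2 * z.re) * X + C (‖z‖ ^ 2)).eval t = ‖(t : ℂ) - z‖ ^ 2 := by
  simp only [Complex.sq_norm, Complex.normSq_apply, eval_add, eval_sub, eval_pow, eval_X, eval_mul,
    eval_C, Complex.sub_re, Complex.sub_im, Complex.ofReal_re, Complex.ofReal_im]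
  ring

theorem natDegree_quadratic_mul (z : ℂ) {g : ℝ[X]} (hg : g ≠ 0) :
    ((X ^ 2 - C (2 * z.re) * X + C (‖z‖ ^ 2)) * g).natDegree = 2 + g.natDegree := by
  have hquad : (X ^ 2 - C (2 * z.re) * X + C (‖z‖ ^ 2)).natDegree = 2 := by compute_degree!
  rw [natDegree_mul (ne_zero_of_natDegree_gt (n := 0) (by omega)) hg, hquad]

theorem exists_eval_eq_norm_sq_of_nonneg {f : ℝ[X]} (hf : ∀ t, 0 ≤ f.eval t) :
    ∃ q : ℂ[X], 2 * q.natDegree = f.natDegree ∧ ∀ t : ℝ, f.eval t = ‖q.eval (t : ℂ)‖ ^ 2 := by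
  induction hn : f.natDegree using Nat.strong_induction_on generalizing f with
  | _ n ih =>
    rcases eq_or_ne f.degree 0 with hdeg | hdeg
    · obtain ⟨c, rfl⟩ : ∃ c, f = C c := ⟨_, eq_C_of_degree_eq_zero hdeg⟩
      have hc : 0 ≤ c := by simpa only [eval_C] using hf 0
      refine ⟨C (√c : ℂ), by simpa only [natDegree_C, mul_zero] using hn, fun t => ?_⟩
      rw [eval_C, eval_C, Complex.norm_real, Real.norm_eq_abs, sq_abs, Real.sq_sqrt hc]
    obtain ⟨z, g, rfl⟩ := exists_quadratic_dvd_of_nonneg hf hdeg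
    rcases eq_or_ne g 0 with rfl | hg0
    · exact ⟨0, by simpa using hn, by simp⟩
    have hdeg_mul := natDegree_quadratic_mul z hg0
    simp only [eval_mul, eval_quadratic_eq_norm_sq] at hf
    have hg : ∀ t, 0 ≤ g.eval t := eval_nonneg_of_forall_ne (x := z.re) fun t ht =>
      nonneg_of_mul_nonneg_right (hf t) <| by
        have : (t : ℂ) - z ≠ 0 := fun h => ht (by simpa [sub_eq_zero] using congrArg Complex.re h)
        positivity
    obtain ⟨q, hq_deg, hq⟩ := ih g.natDegree (by omega) hg rfl
    have hq0 : q ≠ 0 := by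
      rintro rfl
      exact hg0 (Polynomial.funext fun t => by simpa using hq t)
    refine ⟨(X - C z) * q, ?_, fun t => ?_⟩
    · rw [natDegree_mul (X_sub_C_ne_zero z) hq0, natDegree_X_sub_C]
      omega
    · rw [eval_mul, eval_quadratic_eq_norm_sq, hq, eval_mul, eval_sub, eval_X, eval_C, norm_mul,
        mul_pow]

theorem expand_contract_add_X_mul_expand_contract_divX {A : Type*} [CommSemiring A] (q : A[X]) :
    expand A 2 (contract 2 q) + X * expand A 2 (contract 2 q.divX) = q := by
  ext n
  rcases n.even_or_odd' with ⟨k, rfl | rfl⟩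
  · have hodd : (X * expand A 2 (contract 2 q.divX)).coeff (2 * k) = 0 := by
      rcases k with _ | k
      · exact coeff_X_mul_zero _
      · rw [show 2 * (k + 1) = 2 * k + 1 + 1 by ring, coeff_X_mul, coeff_expand two_pos,
          if_neg (by omega)]
    rw [coeff_add, hodd, add_zero, coeff_expand_mul' two_pos, coeff_contract two_ne_zero, mul_comm]
  · rw [coeff_add, coeff_expand two_pos, if_neg (by omega), zero_add, coeff_X_mul,
      coeff_expand_mul' two_pos, coeff_contract two_ne_zero, coeff_divX, mul_comm]

theorem exists_eval_eq_norm_sq_add_mul_norm_sq {f : ℝ[X]} {n : ℕ} (hn : f.natDegree ≤ 2 * n)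
    (hf : ∀ s, 0 ≤ s → 0 ≤ f.eval s) :
    ∃ p q : ℂ[X], p.degree < ↑(n + 1) ∧ q.degree < n ∧
      ∀ s, 0 ≤ s → f.eval s = ‖p.eval (s : ℂ)‖ ^ 2 + s * ‖q.eval (s : ℂ)‖ ^ 2 := by
  obtain ⟨r, hr_deg, hr⟩ := exists_eval_eq_norm_sq_of_nonneg (f := expand ℝ 2 f) fun t => by
    rw [expand_eval]; exact hf _ (sq_nonneg t)
  rw [natDegree_expand] at hr_deg
  refine ⟨contract 2 r, contract 2 r.divX, ?_, ?_, fun s hs => ?_⟩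
  · rw [degree_lt_iff_coeff_zero]
    intro m hm
    rw [coeff_contract two_ne_zero, coeff_eq_zero_of_natDegree_lt (by omega)]
  · rw [degree_lt_iff_coeff_zero]
    intro m hm
    rw [coeff_contract two_ne_zero, coeff_divX, coeff_eq_zero_of_natDegree_lt (by omega)]
  · obtain ⟨t, rfl⟩ : ∃ t : ℝ, t ^ 2 = s := ⟨√s, Real.sq_sqrt hs⟩
    have split (u : ℂ) : r.eval u =
        (contract 2 r).eval (u ^ 2) + u * (contract 2 r.divX).eval (u ^ 2) := by
      conv_lhs => rw [← expand_contract_add_X_mul_expand_contract_divX r]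
      rw [eval_add, eval_mul, eval_X, expand_eval, expand_eval]
    -- Averaging `f (t ^ 2)` over `±t` cancels the cross term of the even and odd parts of `r`.
    have hpos := hr t
    have hneg := hr (-t)
    simp only [expand_eval, split, Complex.ofReal_neg, neg_sq, neg_mul, ← sub_eq_add_neg]
      at hpos hneg
    have hpar := parallelogram_law_with_norm ℂ ((contract 2 r).eval ((t : ℂ) ^ 2))
      (t * (contract 2 r.divX).eval ((t : ℂ) ^ 2))
    rw [norm_mul, mul_pow, Complex.norm_real, Real.norm_eq_abs, sq_abs] at hpar
    push_cast
    linarith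

theorem eval_eq_sum_fin_of_degree_lt {A : Type*} [Semiring A] {p : A[X]} {n : ℕ}
    (hp : p.degree < n) (x : A) : p.eval x = ∑ k : Fin n, p.coeff k * x ^ (k : ℕ) := by
  rw [eval_eq_sum, ← sum_fin (fun k c => c * x ^ k) (fun _ => zero_mul _) hp]

theorem exists_eval_mul_eq_pow_mul_eval_div {F : Type*} [Field F] {p u v : F[X]} {n : ℕ}
    (hp : p.degree < n) (hu : u.natDegree ≤ 1) (hv : v.natDegree ≤ 1) :
    ∃ q : F[X], q.degree < n ∧ ∀ x, v.eval x ≠ 0 →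
      v.eval x * q.eval x = v.eval x ^ n * p.eval (u.eval x / v.eval x) := by
  refine ⟨∑ k : Fin n, C (p.coeff k) * (u ^ (k : ℕ) * v ^ (n - 1 - k)), ?_, fun x hx => ?_⟩
  · rw [← mem_degreeLT]
    refine Submodule.sum_mem _ fun k _ => mem_degreeLT.2 ?_
    have hle : (C (p.coeff k) * (u ^ (k : ℕ) * v ^ (n - 1 - k))).natDegree ≤
        k * 1 + (n - 1 - k) * 1 :=
      (natDegree_C_mul_le _ _).trans <| natDegree_mul_le_of_le
        (natDegree_pow_le_of_le _ hu) (natDegree_pow_le_of_le _ hv)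
    exact degree_le_natDegree.trans_lt (by exact_mod_cast (show _ < n by omega))
  · rw [eval_eq_sum_fin_of_degree_lt hp, eval_finsetSum, Finset.mul_sum, Finset.mul_sum]
    refine Finset.sum_congr rfl fun k _ => ?_
    have hpow : v.eval x ^ n = v.eval x * v.eval x ^ (n - 1 - k) * v.eval x ^ (k : ℕ) := by
      rw [← pow_succ', ← pow_add]
      congr 1
      omega
    rw [eval_mul, eval_C, eval_mul, eval_pow, eval_pow, hpow, div_pow]
    field_simp

theorem exists_real_eval_eq_re (q : ℂ[X]) :
    ∃ p : ℝ[X], p.natDegree ≤ q.natDegree ∧ ∀ t : ℝ, p.eval t = (q.eval (t : ℂ)).re := by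
  refine ⟨∑ k ∈ Finset.range (q.natDegree + 1), C (q.coeff k).re * X ^ k,
    natDegree_sum_le_of_forall_le _ _ fun k hk => ?_, fun t => ?_⟩
  · exact (natDegree_C_mul_X_pow_le _ _).trans (Finset.mem_range_succ_iff.1 hk)
  · rw [eval_finsetSum, eval_eq_sum_range, Complex.re_sum]
    refine Finset.sum_congr rfl fun k _ => ?_
    rw [eval_mul, eval_C, eval_pow, eval_X, ← Complex.ofReal_pow, Complex.re_mul_ofReal]

/-! ### The Möbius map between the half line and an arc -/

theorem circle_mul_conj (ω : Circle) : (ω : ℂ) * conj (ω : ℂ) = 1 := by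
  rw [Complex.mul_conj, Circle.normSq_coe, Complex.ofReal_one]

theorem one_sub_mul_mul_conj_sub (ω w : Circle) :
    (1 - ω * w : ℂ) * conj (w - ω : ℂ) = ((2 * ((w : ℂ).re - (ω : ℂ).re) : ℝ) : ℂ) := by
  have hre (u : ℂ) : u + conj u = ((2 * u.re : ℝ) : ℂ) := by rw [Complex.add_conj]
  rw [mul_sub, Complex.ofReal_sub, ← hre, ← hre, map_sub]
  linear_combination w * circle_mul_conj ω - ω * circle_mul_conj w

theorem add_mul_one_add_mul (ω : Circle) (s : ℝ) :
    ((s + ω) * (1 + s * ω) : ℂ) = ω * ((‖(s + ω : ℂ)‖ ^ 2 : ℝ) : ℂ) := by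
  rw [Complex.ofReal_pow, ← Complex.mul_conj', map_add, Complex.conj_ofReal]
  linear_combination -(s + ω) * circle_mul_conj ω

theorem add_circle_ne_zero {ω : Circle} (hω : (ω : ℂ).im ≠ 0) (s : ℝ) : (s + ω : ℂ) ≠ 0 :=
  fun h => hω (by simpa using congrArg Complex.im h)

theorem exists_circle_mul_add_eq {ω : Circle} (hω : (ω : ℂ).im ≠ 0) (s : ℝ) :
    ∃ w : Circle, (w * (s + ω) : ℂ) = 1 + s * ω := by
  refine ⟨ω * Circle.ofConjDivSelf _ (add_circle_ne_zero hω s), ?_⟩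
  have hcoe : ((Circle.ofConjDivSelf _ (add_circle_ne_zero hω s) : Circle) : ℂ) =
    conj (s + ω : ℂ) / (s + ω) := rfl
  rw [Circle.coe_mul, hcoe, mul_assoc, div_mul_cancel₀ _ (add_circle_ne_zero hω s), map_add,
    Complex.conj_ofReal]
  linear_combination circle_mul_conj ω

theorem re_sub_re_mul_norm_add_sq {ω w : Circle} {s : ℝ}
    (hs : (w * (s + ω) : ℂ) = 1 + s * ω) :
    ((w : ℂ).re - (ω : ℂ).re) * ‖(s + ω : ℂ)‖ ^ 2 = 2 * s * (ω : ℂ).im ^ 2 := by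
  have hw : (w * ((‖(s + ω : ℂ)‖ ^ 2 : ℝ) : ℂ)) = (1 + s * ω) * conj (s + ω : ℂ) := by
    rw [← hs, mul_assoc, Complex.mul_conj', Complex.ofReal_pow]
  have hre := congrArg Complex.re hw
  have hω := ω.normSq_coe
  rw [Complex.re_mul_ofReal] at hre
  rw [sub_mul, hre, Complex.sq_norm]
  simp only [Complex.normSq_apply, Complex.mul_re, Complex.mul_im, Complex.add_re, Complex.add_im,
    Complex.one_re, Complex.one_im, Complex.ofReal_re, Complex.ofReal_im, Complex.conj_re,
    Complex.conj_im] at hω ⊢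
  linear_combination (-s - (ω : ℂ).re) * hω

theorem exists_mul_add_eq {ω w : Circle} (hne : w ≠ ω) :
    ∃ s : ℝ, (w * (s + ω) : ℂ) = 1 + s * ω := by
  have hsub : (w - ω : ℂ) ≠ 0 := sub_ne_zero.2 (Circle.coe_inj.not.2 hne)
  refine ⟨2 * ((w : ℂ).re - (ω : ℂ).re) / ‖(w - ω : ℂ)‖ ^ 2, ?_⟩
  have h : ((2 * ((w : ℂ).re - (ω : ℂ).re) / ‖(w - ω : ℂ)‖ ^ 2 : ℝ) : ℂ) =
      (1 - ω * w) / (w - ω) := by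
    rw [Complex.ofReal_div, ← one_sub_mul_mul_conj_sub, Complex.ofReal_pow, ← Complex.mul_conj',
      mul_div_mul_right _ _ ((_root_.map_ne_zero _).2 hsub)]
  rw [h]
  field_simp
  ring

theorem exists_real_eval_eq_mul_norm_pow {η ω : Circle} (hω : (ω : ℂ).im ≠ 0) {f : Circle → ℝ}
    {p : ℂ[X]} {n : ℕ} (hp : p.natDegree ≤ 2 * n)
    (hf : ∀ z : Circle, p.eval (z : ℂ) = f z * z ^ n) :
    ∃ g : ℝ[X], g.natDegree ≤ 2 * n ∧ ∀ (z : Circle) (s : ℝ),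
      (η * z * (s + ω) : ℂ) = 1 + s * ω → g.eval s = f z * (‖(s + ω : ℂ)‖ ^ 2) ^ n := by
  obtain ⟨q, hq_deg, hq⟩ := exists_eval_mul_eq_pow_mul_eval_div (p := p) (n := 2 * n + 1)
    (u := C (ω : ℂ) * X + 1) (v := C (η : ℂ) * (X + C (ω : ℂ)))
    (degree_le_natDegree.trans_lt (by exact_mod_cast Nat.lt_succ_of_le hp))
    (by compute_degree) (by compute_degree)
  obtain ⟨g, hg_deg, hg⟩ := exists_real_eval_eq_re (C (((η : ℂ) * ω)⁻¹ ^ n) * q)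
  refine ⟨g, hg_deg.trans ((natDegree_C_mul_le _ _).trans ?_), fun z s hs => ?_⟩
  · exact natDegree_le_of_degree_le (Order.le_of_lt_succ (by exact_mod_cast hq_deg))
  have hv : (η * (s + ω) : ℂ) ≠ 0 := mul_ne_zero η.coe_ne_zero (add_circle_ne_zero hω s)
  have hz : (ω * s + 1 : ℂ) / (η * (s + ω)) = z := by
    rw [div_eq_iff hv]
    linear_combination -hs
  have hqs : q.eval (s : ℂ) = (η * (s + ω)) ^ (2 * n) * (f z * z ^ n) := by
    have h := hq s (by simpa only [eval_mul, eval_add, eval_X, eval_C] using hv)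
    simp only [eval_add, eval_mul, eval_X, eval_C, eval_one] at h
    rw [hz, hf, pow_succ', mul_assoc _ _ (f z * _ : ℂ)] at h
    exact mul_left_cancel₀ hv h
  have hnorm : (((η : ℂ) * ω)⁻¹ * ((η * (s + ω)) ^ 2 * z) : ℂ) = ((‖(s + ω : ℂ)‖ ^ 2 : ℝ) : ℂ) := by
    rw [inv_mul_eq_iff_eq_mul₀ (mul_ne_zero η.coe_ne_zero ω.coe_ne_zero)]
    linear_combination η * (s + ω) * hs + η * add_mul_one_add_mul ω s
  have hprod : (((η : ℂ) * ω)⁻¹ ^ n * ((η * (s + ω)) ^ (2 * n) * (f z * z ^ n)) : ℂ) =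
      f z * (((η : ℂ) * ω)⁻¹ * ((η * (s + ω)) ^ 2 * z)) ^ n := by
    generalize (η * (s + ω) : ℂ) = v
    ring
  rw [hg, eval_mul, eval_C, hqs, hprod, hnorm, ← Complex.ofReal_pow, ← Complex.ofReal_mul,
    Complex.ofReal_re]

theorem exists_mul_norm_sq_eval_eq_pow_mul_norm_sq_eval {η ω : Circle} (hω : (ω : ℂ).im ≠ 0)
    {p : ℂ[X]} {n : ℕ} (hp : p.degree < n) :
    ∃ q : ℂ[X], q.degree < n ∧ ∀ (z : Circle) (s : ℝ), (η * z * (s + ω) : ℂ) = 1 + s * ω →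
      ‖(s + ω : ℂ)‖ ^ 2 * ‖p.eval (s : ℂ)‖ ^ 2 =
        (‖(s + ω : ℂ)‖ ^ 2) ^ n * ‖q.eval (z : ℂ)‖ ^ 2 := by
  obtain ⟨q, hq_deg, hq⟩ := exists_eval_mul_eq_pow_mul_eval_div hp
    (u := 1 - C (ω * η : ℂ) * X) (v := C (η : ℂ) * X - C (ω : ℂ))
    (by compute_degree) (by compute_degree)
  have hne : (1 - ω ^ 2 : ℂ) ≠ 0 := by
    have h := mul_ne_zero (add_circle_ne_zero hω 1) (add_circle_ne_zero hω (-1))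
    refine fun h0 => h ?_
    push_cast
    linear_combination -h0
  refine ⟨C ((1 - ω ^ 2) / (1 - ω ^ 2) ^ n : ℂ) * q, ?_, fun z s hs => ?_⟩
  · rw [degree_C_mul (div_ne_zero hne (pow_ne_zero n hne))]
    exact hq_deg
  have hmul : ((s + ω) * (η * z - ω) : ℂ) = 1 - ω ^ 2 := by linear_combination hs
  have hv : (η * z - ω : ℂ) ≠ 0 := right_ne_zero_of_mul (hmul.trans_ne hne)
  have hs' : (1 - ω * η * z : ℂ) / (η * z - ω) = s := by
    rw [div_eq_iff hv]
    linear_combination -hs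
  have h := hq z (by simpa only [eval_sub, eval_mul, eval_X, eval_C] using hv)
  simp only [eval_sub, eval_mul, eval_X, eval_C, eval_one] at h
  rw [hs'] at h
  have hadd := add_circle_ne_zero hω s
  have hpq : ((s + ω) * p.eval (s : ℂ) : ℂ) =
      (s + ω) ^ n * (C ((1 - ω ^ 2) / (1 - ω ^ 2) ^ n : ℂ) * q).eval (z : ℂ) := by
    rw [eval_mul, eval_C, ← hmul, mul_pow]
    field_simp
    linear_combination -h
  rw [← mul_pow, ← norm_mul, hpq, norm_mul, norm_pow]
  ring

theorem norm_add_circle_sq_pos {ω : Circle} (hω : (ω : ℂ).im ≠ 0) (s : ℝ) :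
    0 < ‖(s + ω : ℂ)‖ ^ 2 :=
  pow_pos (norm_pos_iff.2 (add_circle_ne_zero hω s)) 2

theorem eval_nonneg_of_nonneg_on_arc {η ω : Circle} (hω : (ω : ℂ).im ≠ 0) {f : Circle → ℝ}
    {g : ℝ[X]} {n : ℕ}
    (hg : ∀ (z : Circle) (s : ℝ), (η * z * (s + ω) : ℂ) = 1 + s * ω →
      g.eval s = f z * (‖(s + ω : ℂ)‖ ^ 2) ^ n)
    (hf : ∀ z : Circle, (ω : ℂ).re ≤ (η * z : ℂ).re → 0 ≤ f z) {s : ℝ} (hs : 0 ≤ s) :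
    0 ≤ g.eval s := by
  obtain ⟨w, hw⟩ := exists_circle_mul_add_eq hω s
  have hηw : (η * (η⁻¹ * w : Circle) : ℂ) = w := by
    rw [← Circle.coe_mul, mul_inv_cancel_left]
  have hd := norm_add_circle_sq_pos hω s
  rw [hg (η⁻¹ * w) s (by rw [hηw, hw])]
  refine mul_nonneg (hf _ ?_) (pow_nonneg hd.le n)
  rw [hηw, ← sub_nonneg]
  refine nonneg_of_mul_nonneg_left ?_ hd
  rw [re_sub_re_mul_norm_add_sq hw]
  positivity

theorem exists_eq_norm_sq_add_mul_norm_sq_of_nonneg_on_arc {η ω : Circle}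
    (hω : (ω : ℂ).im ≠ 0) {f : Circle → ℝ} {p : ℂ[X]} {n : ℕ} (hp : p.natDegree ≤ 2 * n)
    (hpf : ∀ z : Circle, p.eval (z : ℂ) = f z * z ^ n)
    (hf : ∀ z : Circle, (ω : ℂ).re ≤ (η * z : ℂ).re → 0 ≤ f z) :
    ∃ q₀ q₁ : ℂ[X], q₀.degree < ↑(n + 1) ∧ q₁.degree < n ∧
      ∀ z : Circle, (ω : ℂ).re ≤ (η * z : ℂ).re → η * z ≠ ω →
        f z = ‖q₀.eval (z : ℂ)‖ ^ 2 + ((η * z : ℂ).re - (ω : ℂ).re) * ‖q₁.eval (z : ℂ)‖ ^ 2 := by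
  obtain ⟨g, hg_deg, hg⟩ := exists_real_eval_eq_mul_norm_pow (η := η) hω hp hpf
  obtain ⟨p₀, p₁, hp₀_deg, hp₁_deg, hg_eq⟩ := exists_eval_eq_norm_sq_add_mul_norm_sq hg_deg
    fun s => eval_nonneg_of_nonneg_on_arc hω hg hf
  obtain ⟨q₀, hq₀_deg, hq₀⟩ :=
    exists_mul_norm_sq_eval_eq_pow_mul_norm_sq_eval (η := η) hω hp₀_deg
  obtain ⟨q₁, hq₁_deg, hq₁⟩ :=
    exists_mul_norm_sq_eval_eq_pow_mul_norm_sq_eval (η := η) hω hp₁_deg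
  have hc : (√2 * |(ω : ℂ).im|)⁻¹ ≠ 0 := by positivity
  refine ⟨q₀, C (((√2 * |(ω : ℂ).im|)⁻¹ : ℝ) : ℂ) * q₁, hq₀_deg, ?_, fun z hz hne => ?_⟩
  · rwa [degree_C_mul (Complex.ofReal_ne_zero.2 hc)]
  obtain ⟨s, hs⟩ := exists_mul_add_eq hne
  have hre := re_sub_re_mul_norm_add_sq hs
  rw [Circle.coe_mul] at hs hre
  have hd := norm_add_circle_sq_pos hω s
  have hs_nonneg : 0 ≤ s := by
    have hprod : 0 ≤ 2 * s * (ω : ℂ).im ^ 2 := hre ▸ mul_nonneg (sub_nonneg.2 hz) hd.le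
    exact nonneg_of_mul_nonneg_right (nonneg_of_mul_nonneg_left hprod (by positivity)) two_pos
  have h₀ : ‖p₀.eval (s : ℂ)‖ ^ 2 = (‖(s + ω : ℂ)‖ ^ 2) ^ n * ‖q₀.eval (z : ℂ)‖ ^ 2 :=
    mul_left_cancel₀ hd.ne' (by rw [hq₀ z s hs]; ring)
  have h₁ := hq₁ z s hs
  have hc_sq : (√2 * |(ω : ℂ).im|)⁻¹ ^ 2 = (2 * (ω : ℂ).im ^ 2)⁻¹ := by
    rw [inv_pow, mul_pow, Real.sq_sqrt zero_le_two, sq_abs]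
  rw [eval_mul, eval_C, norm_mul, Complex.norm_real, mul_pow, Real.norm_eq_abs, sq_abs, hc_sq]
  refine mul_right_cancel₀ (pow_ne_zero n hd.ne') ?_
  rw [← hg z s hs, hg_eq s hs_nonneg, h₀]
  field_simp
  linear_combination ((η * z : ℂ).re - (ω : ℂ).re) * h₁ - ‖p₁.eval (s : ℂ)‖ ^ 2 * hre

/-! ### Laurent polynomials on the unit circle -/

/-- Evaluation of a Laurent polynomial at a point of the unit circle. -/
noncomputable def circleEval (z : Circle) : ℂ[T;T⁻¹] →+* ℂ :=
  LaurentPolynomial.eval₂ (RingHom.id ℂ) (Circle.toUnits z)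

@[simp]
theorem circleEval_C (z : Circle) (r : ℂ) : circleEval z (LaurentPolynomial.C r) = r :=
  LaurentPolynomial.eval₂_C _ _ r

@[simp]
theorem circleEval_T (z : Circle) (n : ℤ) : circleEval z (LaurentPolynomial.T n) = z ^ n := by
  rw [circleEval, LaurentPolynomial.eval₂_T, Units.val_zpow_eq_zpow_val, Circle.toUnits_apply,
    Units.val_mk0]

theorem circleEval_toLaurent (z : Circle) (p : ℂ[X]) :
    circleEval z p.toLaurent = p.eval (z : ℂ) := by
  rw [circleEval, LaurentPolynomial.eval₂_toLaurent, Circle.toUnits_apply, Units.val_mk0, eval₂_id]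

theorem eq_of_infinite_circleEval_eq {f g : ℂ[T;T⁻¹]} {S : Set Circle} (hS : S.Infinite)
    (h : ∀ z ∈ S, circleEval z f = circleEval z g) : f = g := by
  obtain ⟨n, p, hp⟩ := LaurentPolynomial.exists_T_pow (f - g)
  have hp_root : ∀ z ∈ S, p.IsRoot (z : ℂ) := fun z hz => by
    rw [IsRoot.def, ← circleEval_toLaurent, hp, map_mul, map_sub, h z hz, sub_self, zero_mul]
  have hp_zero : p = 0 := eq_zero_of_infinite_isRoot p
    ((hS.image Circle.coe_injective.injOn).mono (Set.image_subset_iff.2 hp_root))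
  rw [hp_zero, map_zero, eq_comm, (LaurentPolynomial.isUnit_T n).mul_left_eq_zero] at hp
  exact sub_eq_zero.1 hp

/-- Laurent polynomials with conjugate-symmetric coefficients, i.e. real-valued on the unit
circle. -/
def IsSelfConj (f : ℂ[T;T⁻¹]) : Prop :=
  ∀ k, f.coeff (-k) = conj (f.coeff k)

theorem IsSelfConj.ext {f g : ℂ[T;T⁻¹]} (hf : IsSelfConj f) (hg : IsSelfConj g)
    (h : ∀ m : ℕ, f.coeff m = g.coeff m) : f = g := by
  refine LaurentPolynomial.ext fun k => ?_
  obtain ⟨m, rfl | rfl⟩ := k.eq_nat_or_neg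
  · exact h m
  · rw [hf, hg, h]

theorem IsSelfConj.add {f g : ℂ[T;T⁻¹]} (hf : IsSelfConj f) (hg : IsSelfConj g) :
    IsSelfConj (f + g) := fun k => by
  rw [AddMonoidAlgebra.coeff_add, Finsupp.add_apply, Finsupp.add_apply, hf, hg, map_add]

/-- The trigonometric polynomial `∑ i j, Q i j z ^ (i - j)` with Gram matrix `Q`. -/
noncomputable def gramLaurent {n : ℕ} (Q : Matrix (Fin n) (Fin n) ℂ) : ℂ[T;T⁻¹] :=
  ∑ p : Fin n × Fin n, LaurentPolynomial.C (Q p.1 p.2) *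
    LaurentPolynomial.T (((p.1 : ℕ) : ℤ) - ((p.2 : ℕ) : ℤ))

theorem coeff_gramLaurent {n : ℕ} (Q : Matrix (Fin n) (Fin n) ℂ) (k : ℤ) :
    (gramLaurent Q).coeff k = ∑ p ∈ Finset.univ.filter
      (fun p : Fin n × Fin n => ((p.1 : ℕ) : ℤ) - ((p.2 : ℕ) : ℤ) = k), Q p.1 p.2 := by
  simp only [gramLaurent, ← LaurentPolynomial.single_eq_C_mul_T, AddMonoidAlgebra.coeff_sum,
    Finsupp.finsetSum_apply, AddMonoidAlgebra.coeff_single, Finsupp.single_apply,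
    Finset.sum_filter]

theorem coeff_gramLaurent_of_le {n : ℕ} (Q : Matrix (Fin n) (Fin n) ℂ) {k : ℤ} (hk : n ≤ k) :
    (gramLaurent Q).coeff k = 0 := by
  rw [coeff_gramLaurent, Finset.filter_false_of_mem fun p _ => by omega, Finset.sum_empty]

theorem isSelfConj_gramLaurent {n : ℕ} {Q : Matrix (Fin n) (Fin n) ℂ} (hQ : Q.IsHermitian) :
    IsSelfConj (gramLaurent Q) := fun k => by
  rw [coeff_gramLaurent, coeff_gramLaurent, map_sum, Finset.sum_filter, Finset.sum_filter,
    ← Equiv.sum_comp (Equiv.prodComm _ _)]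
  refine Finset.sum_congr rfl fun p _ => if_congr ?_ (hQ.apply p.2 p.1).symm rfl
  simp only [Equiv.prodComm_apply, Prod.fst_swap, Prod.snd_swap]
  omega

theorem circleEval_gramLaurent {n : ℕ} (Q : Matrix (Fin n) (Fin n) ℂ) (z : Circle) :
    circleEval z (gramLaurent Q) =
      (fun i : Fin n => (z : ℂ) ^ (i : ℕ)) ⬝ᵥ Q *ᵥ star fun j : Fin n => (z : ℂ) ^ (j : ℕ) := by
  simp only [gramLaurent, map_sum, map_mul, circleEval_C, circleEval_T, Fintype.sum_prod_type,
    dotProduct, Matrix.mulVec, Finset.mul_sum]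
  refine Finset.sum_congr rfl fun i _ => Finset.sum_congr rfl fun j _ => ?_
  rw [Pi.star_apply, star_pow, ← starRingEnd_apply, ← Circle.coe_inv_eq_conj, Circle.coe_inv,
    zpow_sub₀ z.coe_ne_zero, zpow_natCast, zpow_natCast]
  ring

theorem circleEval_gramLaurent_nonneg {n : ℕ} {Q : Matrix (Fin n) (Fin n) ℂ}
    (hQ : Q.PosSemidef) (z : Circle) : 0 ≤ circleEval z (gramLaurent Q) := by
  rw [circleEval_gramLaurent]
  simpa only [star_star] using hQ.dotProduct_mulVec_nonneg (star fun i : Fin n => (z : ℂ) ^ (i : ℕ))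

theorem exists_posSemidef_circleEval_eq_norm_sq {n : ℕ} {q : ℂ[X]} (hq : q.degree < n) :
    ∃ Q : Matrix (Fin n) (Fin n) ℂ, Q.PosSemidef ∧
      ∀ z : Circle, circleEval z (gramLaurent Q) = ((‖q.eval (z : ℂ)‖ ^ 2 : ℝ) : ℂ) := by
  set v : Fin n → ℂ := fun i => q.coeff i
  refine ⟨Matrix.vecMulVec v (star v), Matrix.posSemidef_vecMulVec_self_star v, fun z => ?_⟩
  have hv : (fun i : Fin n => (z : ℂ) ^ (i : ℕ)) ⬝ᵥ v = q.eval (z : ℂ) := by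
    rw [eval_eq_sum_fin_of_degree_lt hq, dotProduct_comm]
    rfl
  rw [circleEval_gramLaurent, Matrix.vecMulVec_mulVec, Matrix.star_dotProduct_star, hv,
    dotProduct_smul, hv, op_smul_eq_mul, Complex.ofReal_pow]
  exact Complex.mul_conj' _

/-- The trigonometric polynomial `α z - β + conj α z⁻¹`, whose nonnegativity cuts out an arc of
the unit circle. -/
noncomputable def arcWeight (α : ℂ) (β : ℝ) : ℂ[T;T⁻¹] :=
  LaurentPolynomial.C α * LaurentPolynomial.T 1 - LaurentPolynomial.C (β : ℂ) +
    LaurentPolynomial.C (conj α) * LaurentPolynomial.T (-1)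

theorem circleEval_arcWeight (a : ℂ) (β : ℝ) (z : Circle) :
    circleEval z (arcWeight (1 / 2 * a) β) = (((a * z : ℂ).re - β : ℝ) : ℂ) := by
  simp only [arcWeight, map_add, map_sub, map_mul, map_div₀, map_one, map_ofNat, circleEval_C,
    circleEval_T, zpow_one, zpow_neg_one]
  rw [Complex.ofReal_sub, Complex.re_eq_add_conj, map_mul, ← Circle.coe_inv_eq_conj, Circle.coe_inv]
  ring

theorem coeff_arcWeight_mul (α : ℂ) (β : ℝ) (g : ℂ[T;T⁻¹]) (k : ℤ) :
    (arcWeight α β * g).coeff k =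
      α * g.coeff (k - 1) - β * g.coeff k + conj α * g.coeff (k + 1) := by
  rw [arcWeight, ← LaurentPolynomial.single_eq_C_mul_T, ← LaurentPolynomial.single_eq_C_mul_T,
    ← LaurentPolynomial.single_eq_C, add_mul, sub_mul, AddMonoidAlgebra.coeff_add,
    AddMonoidAlgebra.coeff_sub, Finsupp.add_apply, Finsupp.sub_apply]
  simp only [AddMonoidAlgebra.coeff_single_mul_apply, neg_zero, zero_add, neg_neg, neg_add_eq_sub,
    add_comm 1 k]

theorem IsSelfConj.arcWeight_mul {g : ℂ[T;T⁻¹]} (hg : IsSelfConj g) (α : ℂ) (β : ℝ) :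
    IsSelfConj (arcWeight α β * g) := fun k => by
  rw [coeff_arcWeight_mul, coeff_arcWeight_mul, ← neg_add', show -k + 1 = -(k - 1) by ring, hg,
    hg, hg]
  simp only [map_add, map_sub, map_mul, Complex.conj_conj, Complex.conj_ofReal]
  ring

/-- The trigonometric polynomial `∑ m, r m cos (m θ)` in `z = exp (θ I)`, which is the Chebyshev
expansion `∑ m, r m T_m` at `re z`. -/
noncomputable def chebyshevLaurent {n : ℕ} (r : Fin n → ℝ) : ℂ[T;T⁻¹] :=
  ∑ m : Fin n, LaurentPolynomial.C ((r m / 2 : ℂ)) *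
    (LaurentPolynomial.T ((m : ℕ) : ℤ) + LaurentPolynomial.T (-((m : ℕ) : ℤ)))

theorem coeff_chebyshevLaurent {n : ℕ} (r : Fin n → ℝ) (k : ℤ) :
    (chebyshevLaurent r).coeff k = ∑ m : Fin n,
      ((if ((m : ℕ) : ℤ) = k then (r m / 2 : ℂ) else 0) +
        if -((m : ℕ) : ℤ) = k then (r m / 2 : ℂ) else 0) := by
  simp only [chebyshevLaurent, mul_add, ← LaurentPolynomial.single_eq_C_mul_T,
    AddMonoidAlgebra.coeff_sum, AddMonoidAlgebra.coeff_add, Finsupp.finsetSum_apply,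
    Finsupp.add_apply, AddMonoidAlgebra.coeff_single, Finsupp.single_apply]

theorem coeff_chebyshevLaurent_fin {M : ℕ} (r : Fin (M + 1) → ℝ) (m : Fin (M + 1)) :
    (chebyshevLaurent r).coeff ((m : ℕ) : ℤ) = if m = 0 then (r m : ℂ) else r m / 2 := by
  have h₁ : ∀ i : Fin (M + 1), ((i : ℕ) : ℤ) = ((m : ℕ) : ℤ) ↔ i = m := fun i => by
    rw [Nat.cast_inj, Fin.val_inj]
  have h₂ : ∀ i : Fin (M + 1), -((i : ℕ) : ℤ) = ((m : ℕ) : ℤ) ↔ i = m ∧ m = 0 := fun i => by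
    rw [Fin.ext_iff, Fin.ext_iff, Fin.val_zero]
    omega
  simp only [coeff_chebyshevLaurent, h₁, h₂, ite_and, Finset.sum_add_distrib, Finset.sum_ite_eq',
    Finset.mem_univ, if_true]
  split_ifs with hm
  · exact add_halves _
  · exact add_zero _

theorem coeff_chebyshevLaurent_of_le {n : ℕ} (r : Fin n → ℝ) {k : ℤ} (hk : n ≤ k) :
    (chebyshevLaurent r).coeff k = 0 := by
  rw [coeff_chebyshevLaurent]
  refine Finset.sum_eq_zero fun m _ => ?_
  rw [if_neg (by omega), if_neg (by omega), add_zero]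

theorem isSelfConj_chebyshevLaurent {n : ℕ} (r : Fin n → ℝ) :
    IsSelfConj (chebyshevLaurent r) := fun k => by
  have hr : ∀ m, conj (r m / 2 : ℂ) = r m / 2 := fun m => by
    exact_mod_cast Complex.conj_ofReal (r m / 2)
  simp only [coeff_chebyshevLaurent, map_sum, map_add, apply_ite conj, map_zero, hr]
  exact Finset.sum_congr rfl fun m _ => (add_comm _ _).trans <|
    congrArg₂ (· + ·) (if_congr neg_inj rfl rfl) (if_congr neg_eq_iff_eq_neg.symm rfl rfl)

theorem circle_zpow_add_zpow_neg (z : Circle) (n : ℤ) :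
    (z ^ n + z ^ (-n) : ℂ) = 2 * (((Chebyshev.T ℝ n).eval (z : ℂ).re : ℝ) : ℂ) := by
  obtain ⟨θ, rfl⟩ := Circle.exp_surjective z
  rw [Circle.coe_exp, Complex.exp_ofReal_mul_I_re, Chebyshev.T_real_cos, ← Complex.exp_int_mul,
    ← Complex.exp_int_mul]
  push_cast
  rw [Complex.two_cos]
  ring_nf

theorem circleEval_chebyshevLaurent {n : ℕ} (r : Fin n → ℝ) (z : Circle) :
    circleEval z (chebyshevLaurent r) =
      ((∑ m : Fin n, r m * (Chebyshev.T ℝ ((m : ℕ) : ℤ)).eval (z : ℂ).re : ℝ) : ℂ) := by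
  simp only [chebyshevLaurent, map_sum, map_mul, map_add, circleEval_C, circleEval_T,
    circle_zpow_add_zpow_neg, Complex.ofReal_sum, Complex.ofReal_mul]
  exact Finset.sum_congr rfl fun m _ => by ring

theorem sdpCert_iff_exists_gramLaurent {M : ℕ} {α : ℂ} {β : ℝ} {r : Fin (M + 1) → ℝ} :
    SdpCert M α β r ↔ ∃ (Q : Matrix (Fin (M + 1)) (Fin (M + 1)) ℂ) (R : Matrix (Fin M) (Fin M) ℂ),
      Q.PosSemidef ∧ R.PosSemidef ∧
        gramLaurent Q + arcWeight α β * gramLaurent R = chebyshevLaurent r := by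
  have hcoeff (Q : Matrix (Fin (M + 1)) (Fin (M + 1)) ℂ) (R : Matrix (Fin M) (Fin M) ℂ) (k : ℤ) :
      (gramLaurent Q + arcWeight α β * gramLaurent R).coeff k = (gramLaurent Q).coeff k +
        α * (gramLaurent R).coeff (k - 1) - β * (gramLaurent R).coeff k +
          conj α * (gramLaurent R).coeff (k + 1) := by
    rw [AddMonoidAlgebra.coeff_add, Finsupp.add_apply, coeff_arcWeight_mul]
    ring
  simp only [SdpCert, ← coeff_gramLaurent, ← hcoeff, ← coeff_chebyshevLaurent_fin]
  refine exists₂_congr fun Q R => and_congr_right fun hQ => and_congr_right fun hR =>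
    ⟨fun h => ?_, fun h m => by rw [h]⟩
  refine ((isSelfConj_gramLaurent hQ.isHermitian).add
    ((isSelfConj_gramLaurent hR.isHermitian).arcWeight_mul α β)).ext
      (isSelfConj_chebyshevLaurent r) fun m => ?_
  obtain hm | hm := lt_or_ge m (M + 1)
  · exact h ⟨m, hm⟩
  · rw [hcoeff, coeff_chebyshevLaurent_of_le r (by omega), coeff_gramLaurent_of_le Q (by omega),
      coeff_gramLaurent_of_le R (by omega), coeff_gramLaurent_of_le R (by omega),
      coeff_gramLaurent_of_le R (by omega)]
    ring

/-! ### Certificates on an interval -/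

theorem re_circle_exp (t : ℝ) : (Circle.exp t : ℂ).re = Real.cos t := by
  rw [Circle.coe_exp, Complex.exp_ofReal_mul_I_re]

theorem image_re_arc {A B : ℝ} (hB : 0 ≤ B) (hBA : B ≤ A) (hA : A ≤ π) :
    (fun z : Circle => (z : ℂ).re) '' {z : Circle |
      Real.cos ((A - B) / 2) ≤ (Circle.exp ((A + B) / 2) * z : ℂ).re} =
        Set.Icc (Real.cos A) (Real.cos B) := by
  refine Set.Subset.antisymm ?_ fun x hx => ?_
  · rintro _ ⟨z, hz, rfl⟩
    obtain ⟨θ, hθ, hz_eq⟩ : ∃ θ : ℝ, |θ| ≤ π ∧ Circle.exp ((A + B) / 2) * z = Circle.exp θ :=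
      ⟨_, Complex.abs_arg_le_pi _, (Circle.exp_arg _).symm⟩
    rw [Set.mem_ofPred_eq, ← Circle.coe_mul, hz_eq, re_circle_exp, ← Real.cos_abs θ,
      Real.strictAntiOn_cos.le_iff_ge ⟨by linarith, by linarith⟩ ⟨abs_nonneg θ, hθ⟩, abs_le] at hz
    have hz_exp : z = Circle.exp (θ - (A + B) / 2) := by
      rw [Circle.exp_sub, ← hz_eq, mul_div_cancel_left]
    dsimp only
    rw [hz_exp, re_circle_exp, ← Real.cos_neg (θ - _), neg_sub]
    exact ⟨Real.cos_le_cos_of_nonneg_of_le_pi (by linarith) hA (by linarith),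
      Real.cos_le_cos_of_nonneg_of_le_pi hB (by linarith) (by linarith)⟩
  · obtain ⟨t, ht, rfl⟩ : ∃ t ∈ Set.Icc B A, Real.cos t = x := by
      refine ⟨Real.arccos x, ⟨?_, ?_⟩, Real.cos_arccos ((Real.neg_one_le_cos A).trans hx.1)
        (hx.2.trans (Real.cos_le_one B))⟩
      · rw [← Real.arccos_cos hB (hBA.trans hA)]
        exact Real.arccos_le_arccos hx.2
      · rw [← Real.arccos_cos (hB.trans hBA) hA]
        exact Real.arccos_le_arccos hx.1
    refine ⟨Circle.exp (-t), ?_, ?_⟩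
    · rw [Set.mem_ofPred_eq, ← Circle.coe_mul, ← Circle.exp_add, re_circle_exp,
        ← Real.cos_abs (_ + _)]
      exact Real.cos_le_cos_of_nonneg_of_le_pi (abs_nonneg _) (by linarith)
        (abs_le.2 ⟨by linarith [ht.2], by linarith [ht.1]⟩)
    · dsimp only
      rw [re_circle_exp, Real.cos_neg]

theorem exists_eval_eq_circleEval_chebyshevLaurent_mul_pow {M : ℕ} (r : Fin (M + 1) → ℝ) :
    ∃ p : ℂ[X], p.natDegree ≤ 2 * M ∧
      ∀ z : Circle, p.eval (z : ℂ) = circleEval z (chebyshevLaurent r) * z ^ M := by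
  refine ⟨∑ m : Fin (M + 1), C (r m / 2 : ℂ) * (X ^ (M + m) + X ^ (M - m)),
    natDegree_sum_le_of_forall_le _ _ fun m _ => ?_, fun z => ?_⟩
  · refine (natDegree_C_mul_le _ _).trans (natDegree_add_le_of_degree_le ?_ ?_)
    · exact (natDegree_X_pow_le _).trans (by omega)
    · exact (natDegree_X_pow_le _).trans (by omega)
  · have hpow (m : Fin (M + 1)) : (z ^ (M - m : ℕ) : ℂ) = z ^ (-((m : ℕ) : ℤ)) * z ^ M := by
      rw [zpow_neg, zpow_natCast, ← div_eq_inv_mul, pow_sub₀ _ z.coe_ne_zero (by omega),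
        div_eq_mul_inv]
    simp only [chebyshevLaurent, map_sum, map_mul, map_add, circleEval_C, circleEval_T,
      eval_finsetSum, eval_mul, eval_add, eval_C, eval_X_pow, hpow, zpow_natCast, pow_add,
      Finset.sum_mul]
    exact Finset.sum_congr rfl fun m _ => by ring

theorem circleEval_add_arcWeight_mul_nonneg {m n : ℕ} {Q : Matrix (Fin m) (Fin m) ℂ}
    {R : Matrix (Fin n) (Fin n) ℂ} (hQ : Q.PosSemidef) (hR : R.PosSemidef) {a : ℂ} {β : ℝ}
    {z : Circle} (hz : β ≤ (a * z : ℂ).re) :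
    0 ≤ circleEval z (gramLaurent Q + arcWeight (1 / 2 * a) β * gramLaurent R) := by
  rw [map_add, map_mul, circleEval_arcWeight]
  exact add_nonneg (circleEval_gramLaurent_nonneg hQ z)
    (mul_nonneg (Complex.zero_le_real.2 (sub_nonneg.2 hz)) (circleEval_gramLaurent_nonneg hR z))

theorem sdpCert_of_nonneg_on_arc {η ω : Circle} (hω : (ω : ℂ).im ≠ 0)
    (hinf : {z : Circle | (ω : ℂ).re ≤ (η * z : ℂ).re}.Infinite) {M : ℕ} {r : Fin (M + 1) → ℝ}
    (hr : ∀ z : Circle, (ω : ℂ).re ≤ (η * z : ℂ).re →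
      0 ≤ ∑ m : Fin (M + 1), r m * (Chebyshev.T ℝ ((m : ℕ) : ℤ)).eval (z : ℂ).re) :
    SdpCert M (1 / 2 * η) (ω : ℂ).re r := by
  obtain ⟨p, hp_deg, hp⟩ := exists_eval_eq_circleEval_chebyshevLaurent_mul_pow r
  simp only [circleEval_chebyshevLaurent] at hp
  obtain ⟨q₀, q₁, hq₀_deg, hq₁_deg, hq⟩ :=
    exists_eq_norm_sq_add_mul_norm_sq_of_nonneg_on_arc hω hp_deg hp hr
  obtain ⟨Q, hQ, hQ_eval⟩ := exists_posSemidef_circleEval_eq_norm_sq hq₀_deg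
  obtain ⟨R, hR, hR_eval⟩ := exists_posSemidef_circleEval_eq_norm_sq hq₁_deg
  refine sdpCert_iff_exists_gramLaurent.2 ⟨Q, R, hQ, hR,
    eq_of_infinite_circleEval_eq (hinf.sdiff (Set.finite_singleton (η⁻¹ * ω))) ?_⟩
  rintro z ⟨hz, hne⟩
  rw [map_add, map_mul, circleEval_arcWeight, hQ_eval, hR_eval, circleEval_chebyshevLaurent,
    hq z hz fun h => hne (eq_inv_mul_of_mul_eq h)]
  norm_cast

theorem sdpCert_iff_nonneg_on_Icc_cos {A B : ℝ} (hB : 0 ≤ B) (hBA : B < A) (hA : A ≤ π) {M : ℕ}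
    {r : Fin (M + 1) → ℝ} :
    SdpCert M (1 / 2 * Circle.exp ((A + B) / 2)) (Real.cos ((A - B) / 2)) r ↔
      ∀ x ∈ Set.Icc (Real.cos A) (Real.cos B),
        0 ≤ ∑ m : Fin (M + 1), r m * (Chebyshev.T ℝ ((m : ℕ) : ℤ)).eval x := by
  have harc := image_re_arc hB hBA.le hA
  rw [← harc, Set.forall_mem_image]
  refine ⟨fun h z hz => ?_, fun h => ?_⟩
  · obtain ⟨Q, R, hQ, hR, hQR⟩ := sdpCert_iff_exists_gramLaurent.1 h
    rw [← Complex.zero_le_real, ← circleEval_chebyshevLaurent, ← hQR]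
    exact circleEval_add_arcWeight_mul_nonneg hQ hR hz
  · have hω_im : (Circle.exp ((A - B) / 2) : ℂ).im ≠ 0 := by
      rw [Circle.coe_exp, Complex.exp_ofReal_mul_I_im]
      exact (Real.sin_pos_of_pos_of_lt_pi (by linarith) (by linarith)).ne'
    have hinf := Set.Icc_infinite (Real.cos_lt_cos_of_nonneg_of_le_pi hB hA hBA)
    rw [← harc] at hinf
    rw [← re_circle_exp] at h hinf ⊢
    exact sdpCert_of_nonneg_on_arc hω_im hinf.of_image h

theorem sdpCert_iff_nonneg {a b : ℝ} (ha : -1 ≤ a) (hab : a < b) (hb : b ≤ 1) {α : ℂ}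
    (hα : α = (1 / 2) * Complex.exp (Complex.I *
      (((Real.arccos a + Real.arccos b) / 2 : ℝ) : ℂ))) {β : ℝ}
    (hβ : β = Real.cos ((Real.arccos a - Real.arccos b) / 2)) {M : ℕ} {r : Fin (M + 1) → ℝ} :
    SdpCert M α β r ↔ ∀ x ∈ Set.Icc a b,
      0 ≤ ∑ m : Fin (M + 1), r m * (Chebyshev.T ℝ ((m : ℕ) : ℤ)).eval x := by
  rw [hα, hβ, mul_comm Complex.I, ← Circle.coe_exp, sdpCert_iff_nonneg_on_Icc_cos
    (Real.arccos_nonneg b) (Real.arccos_lt_arccos ha hab hb) (Real.arccos_le_pi a),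
    Real.cos_arccos ha (hab.le.trans hb), Real.cos_arccos (ha.trans hab.le) hb]

theorem exists_chebyshev_expansion {R : Type*} [Field R] [NeZero (2 : R)] {p : R[X]} {M : ℕ}
    (hp : p.natDegree ≤ M) :
    ∃ τ : Fin (M + 1) → R, p = ∑ m : Fin (M + 1), C (τ m) * Chebyshev.T R ((m : ℕ) : ℤ) := by
  have hmem : p ∈ degreeLT R (M + 1) := mem_degreeLT.2
    ((degree_le_of_natDegree_le hp).trans_lt (by exact_mod_cast M.lt_succ_self))
  rw [← Sequence.span_degreeLT (Chebyshev.chebyshevTsequence R) fun i _ =>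
      (leadingCoeff_ne_zero.2 (Sequence.ne_zero _ i)).isUnit,
    ← Finset.coe_Iio, Submodule.mem_span_image_finset_iff_exists_fun'] at hmem
  obtain ⟨c, rfl⟩ := hmem
  refine ⟨fun m => c m, ?_⟩
  simp only [smul_eq_C_mul, Nat.Iio_eq_range, Finset.sum_range]
  rfl

/-! ### Least certified bound -/

theorem sInf_setOf_exists_forall_le_eq {ι X : Type*} {S : Set ι} (hS : S.Nonempty) {K : Set X}
    (hK : K.Nonempty) {g : ι → X → ℝ} (hg : ∀ i ∈ S, BddAbove (g i '' K))
    (hg_nonneg : ∀ i ∈ S, ∀ x ∈ K, 0 ≤ g i x) :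
    sInf {c : ℝ | ∃ i ∈ S, ∀ x ∈ K, g i x ≤ c} =
      sInf {r : ℝ | ∃ i ∈ S, r = sSup (g i '' K)} := by
  have hbdd : BddBelow {r : ℝ | ∃ i ∈ S, r = sSup (g i '' K)} := by
    refine ⟨0, ?_⟩
    rintro _ ⟨i, hi, rfl⟩
    exact Real.sSup_nonneg (Set.forall_mem_image.2 (hg_nonneg i hi))
  have hne : {r : ℝ | ∃ i ∈ S, r = sSup (g i '' K)}.Nonempty := by
    obtain ⟨i, hi⟩ := hS
    exact ⟨_, i, hi, rfl⟩
  have hupper : {c : ℝ | ∃ i ∈ S, ∀ x ∈ K, g i x ≤ c} =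
      upperClosure {r : ℝ | ∃ i ∈ S, r = sSup (g i '' K)} := by
    ext c
    rw [SetLike.mem_coe, mem_upperClosure]
    constructor
    · rintro ⟨i, hi, h⟩
      exact ⟨_, ⟨i, hi, rfl⟩, csSup_le (hK.image _) (Set.forall_mem_image.2 h)⟩
    · rintro ⟨_, ⟨i, hi, rfl⟩, hc⟩
      exact ⟨i, hi, fun x hx => (le_csSup (hg i hi) (Set.mem_image_of_mem _ hx)).trans hc⟩
  rw [hupper]
  refine IsGLB.csInf_eq ?_ (hne.mono subset_upperClosure)
  rw [IsGLB, lowerBounds_upperClosure]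
  exact isGLB_csInf hne hbdd

theorem forall_abs_div_le_iff_sdpCert {a b : ℝ} (ha : -1 ≤ a) (hab : a < b) (hb : b ≤ 1) {α : ℂ}
    (hα : α = (1 / 2) * Complex.exp (Complex.I *
      (((Real.arccos a + Real.arccos b) / 2 : ℝ) : ℂ))) {β : ℝ}
    (hβ : β = Real.cos ((Real.arccos a - Real.arccos b) / 2)) {p q : ℝ[X]}
    (hp : ∀ x ∈ Set.Icc a b, 0 < p.eval x) {M : ℕ} {σ τ : Fin (M + 1) → ℝ}
    (hσ : p = ∑ m : Fin (M + 1), C (σ m) * Chebyshev.T ℝ ((m : ℕ) : ℤ))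
    (hτ : q = ∑ m : Fin (M + 1), C (τ m) * Chebyshev.T ℝ ((m : ℕ) : ℤ)) (c : ℝ) :
    (∀ x ∈ Set.Icc a b, |q.eval x / p.eval x| ≤ c) ↔
      ∀ e : ℝ, e = 1 ∨ e = -1 → SdpCert M α β fun m => σ m * c + e * τ m := by
  have heval (e x : ℝ) : ∑ m : Fin (M + 1), (σ m * c + e * τ m) *
      (Chebyshev.T ℝ ((m : ℕ) : ℤ)).eval x = c * p.eval x + e * q.eval x := by
    simp only [hσ, hτ, eval_finsetSum, eval_mul, eval_C, Finset.mul_sum, ← Finset.sum_add_distrib]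
    exact Finset.sum_congr rfl fun m _ => by ring
  simp only [sdpCert_iff_nonneg ha hab hb hα hβ, heval, forall_eq_or_imp, forall_eq, ← forall_and]
  refine forall₂_congr fun x hx => ?_
  rw [abs_div, abs_of_pos (hp x hx), div_le_iff₀ (hp x hx), abs_le]
  constructor <;> rintro ⟨h₁, h₂⟩ <;> constructor <;> linarith

theorem sInf_setOf_exists_forall_abs_div_le_eq {K : Set ℝ} (hK : IsCompact K) (hne : K.Nonempty)
    {p : ℝ[X]} (hp : ∀ x ∈ K, p.eval x ≠ 0) (q : ℝ[X]) {S : Set ℝ[X]} (hS : S.Nonempty) :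
    sInf {c : ℝ | ∃ P ∈ S, ∀ x ∈ K, |q.eval x * P.eval x / p.eval x| ≤ c} =
      sInf {r : ℝ | ∃ P ∈ S, r = sSup ((fun x => |q.eval x * P.eval x / p.eval x|) '' K)} := by
  refine sInf_setOf_exists_forall_le_eq hS hne (fun P _ => ?_) fun P _ x _ => abs_nonneg _
  have hcont : ContinuousOn (fun x => |q.eval x * P.eval x / p.eval x|) K :=
    ((q.continuousOn.mul P.continuousOn).div p.continuousOn hp).abs
  exact (hK.image_of_continuousOn hcont).bddAbove

theorem chebyshev_first_kind_sdp_general {ι : Type*} {s : Finset ι} (hs : s.Nonempty)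
    {a b : ι → ℝ} (ha : ∀ ℓ ∈ s, -1 ≤ a ℓ) (hab : ∀ ℓ ∈ s, a ℓ < b ℓ) (hb : ∀ ℓ ∈ s, b ℓ ≤ 1)
    {Sig Om : ℝ[X]} (hSig : ∀ ℓ ∈ s, ∀ x ∈ Set.Icc (a ℓ) (b ℓ), 0 < Sig.eval x)
    {N M : ℕ} (hM : Om.natDegree + N ≤ M) {σ : Fin (M + 1) → ℝ}
    (hσ : Sig = ∑ m : Fin (M + 1), C (σ m) * Chebyshev.T ℝ ((m : ℕ) : ℤ)) {α : ι → ℂ}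
    (hα : ∀ ℓ, α ℓ = (1 / 2) * Complex.exp (Complex.I *
      (((Real.arccos (a ℓ) + Real.arccos (b ℓ)) / 2 : ℝ) : ℂ))) {β : ι → ℝ}
    (hβ : ∀ ℓ, β ℓ = Real.cos ((Real.arccos (a ℓ) - Real.arccos (b ℓ)) / 2)) :
    (∀ (P : ℝ[X]) (c : ℝ) (τ : Fin (M + 1) → ℝ),
      Om * P = ∑ m : Fin (M + 1), C (τ m) * Chebyshev.T ℝ ((m : ℕ) : ℤ) →
      ((∀ ℓ ∈ s, ∀ x ∈ Set.Icc (a ℓ) (b ℓ), |Om.eval x * P.eval x / Sig.eval x| ≤ c) ↔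
        ∀ ℓ ∈ s, ∀ e : ℝ, e = 1 ∨ e = -1 →
          SdpCert M (α ℓ) (β ℓ) fun m => σ m * c + e * τ m)) ∧
    sInf {c : ℝ | ∃ P : ℝ[X], P.Monic ∧ P.natDegree = N ∧ ∃ τ : Fin (M + 1) → ℝ,
        Om * P = ∑ m : Fin (M + 1), C (τ m) * Chebyshev.T ℝ ((m : ℕ) : ℤ) ∧
          ∀ ℓ ∈ s, ∀ e : ℝ, e = 1 ∨ e = -1 →
            SdpCert M (α ℓ) (β ℓ) fun m => σ m * c + e * τ m} =
      sInf {r : ℝ | ∃ P : ℝ[X], P.Monic ∧ P.natDegree = N ∧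
        r = sSup ((fun x => |Om.eval x * P.eval x / Sig.eval x|) ''
          ⋃ ℓ ∈ s, Set.Icc (a ℓ) (b ℓ))} := by
  have hcert (P : ℝ[X]) (c : ℝ) (τ : Fin (M + 1) → ℝ)
      (hτ : Om * P = ∑ m : Fin (M + 1), C (τ m) * Chebyshev.T ℝ ((m : ℕ) : ℤ)) :
      (∀ ℓ ∈ s, ∀ x ∈ Set.Icc (a ℓ) (b ℓ), |Om.eval x * P.eval x / Sig.eval x| ≤ c) ↔
        ∀ ℓ ∈ s, ∀ e : ℝ, e = 1 ∨ e = -1 →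
          SdpCert M (α ℓ) (β ℓ) fun m => σ m * c + e * τ m := by
    simp only [← eval_mul]
    exact forall₂_congr fun ℓ hℓ => forall_abs_div_le_iff_sdpCert (ha ℓ hℓ) (hab ℓ hℓ) (hb ℓ hℓ)
      (hα ℓ) (hβ ℓ) (hSig ℓ hℓ) hσ hτ c
  refine ⟨hcert, ?_⟩
  obtain ⟨ℓ₀, hℓ₀⟩ := hs
  have hforall_mem_K (g : ℝ → Prop) : (∀ x ∈ ⋃ ℓ ∈ s, Set.Icc (a ℓ) (b ℓ), g x) ↔
      ∀ ℓ ∈ s, ∀ x ∈ Set.Icc (a ℓ) (b ℓ), g x := by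
    simp only [Set.mem_iUnion₂]
    exact ⟨fun h ℓ hℓ x hx => h x ⟨ℓ, hℓ, hx⟩, fun h x ⟨ℓ, hℓ, hx⟩ => h ℓ hℓ x hx⟩
  have hminimax := sInf_setOf_exists_forall_abs_div_le_eq
    (s.isCompact_biUnion fun ℓ _ => isCompact_Icc (a := a ℓ) (b := b ℓ))
    ⟨a ℓ₀, Set.mem_biUnion hℓ₀ (Set.left_mem_Icc.2 (hab ℓ₀ hℓ₀).le)⟩
    ((hforall_mem_K _).2 fun ℓ hℓ x hx => (hSig ℓ hℓ x hx).ne') Om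
    (S := {P : ℝ[X] | P.Monic ∧ P.natDegree = N}) ⟨X ^ N, monic_X_pow N, natDegree_X_pow N⟩
  simp only [hforall_mem_K, Set.mem_ofPred_eq, and_assoc] at hminimax
  rw [← hminimax]
  congr 1
  ext c
  refine exists_congr fun P => and_congr_right fun _ => and_congr_right fun hP => ⟨?_, fun h => ?_⟩
  · rintro ⟨τ, hτ, h⟩
    exact (hcert P c τ hτ).2 h
  · obtain ⟨τ, hτ⟩ := exists_chebyshev_expansion
      (natDegree_mul_le.trans ((Nat.add_le_add_left hP.le _).trans hM))
    exact ⟨τ, hτ, (hcert P c τ hτ).1 h⟩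

theorem le_and_le_of_interlacing {α : Type*} [Preorder α] {L : ℕ} {a b : ℕ → α}
    (hab : ∀ ℓ < L, a ℓ ≤ b ℓ) (hgap : ∀ ℓ, ℓ + 1 < L → b ℓ ≤ a (ℓ + 1)) {k ℓ : ℕ} (hkℓ : k ≤ ℓ)
    (hℓ : ℓ < L) : a k ≤ a ℓ ∧ b k ≤ b ℓ := by
  induction ℓ, hkℓ using Nat.le_induction with
  | base => exact ⟨le_rfl, le_rfl⟩
  | succ ℓ _ ih =>
    obtain ⟨ha, hb⟩ := ih (Nat.lt_of_succ_lt hℓ)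
    exact ⟨ha.trans ((hab ℓ (Nat.lt_of_succ_lt hℓ)).trans (hgap ℓ hℓ)),
      hb.trans ((hgap ℓ hℓ).trans (hab (ℓ + 1) hℓ))⟩

/-- For `K = ⋃_{ℓ<L} [a ℓ, b ℓ] ⊆ [-1,1]` and a rational weight `w = Σ/Ω` with `Σ, Ω > 0`
on each interval: (1) for a polynomial `P` of degree at most `N` and `c ∈ ℝ`, the bound
`|Ω P / Σ| ≤ c` on `K` is equivalent to the existence, for each interval and each sign,
of the semidefinite certificate for nonnegativity of `c·Σ ± Ω·P`; (2) consequently, the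
minimal such `c` over monic `P` of degree `N` equals the minimal sup-norm of `P/w = ΩP/Σ`
on `K` over monic `P` of degree `N`. -/
theorem chebyshev_first_kind_sdp
    (L : ℕ) (hL : 0 < L) (a b : ℕ → ℝ)
    (ha0 : a 0 = -1) (hbL : b (L - 1) = 1)
    (hab : ∀ ℓ < L, a ℓ < b ℓ)
    (hgap : ∀ ℓ, ℓ + 1 < L → b ℓ < a (ℓ + 1))
    (Sig Om : Polynomial ℝ)
    (hSig : ∀ ℓ < L, ∀ x ∈ Set.Icc (a ℓ) (b ℓ), 0 < Sig.eval x)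
    (hOm : ∀ ℓ < L, ∀ x ∈ Set.Icc (a ℓ) (b ℓ), 0 < Om.eval x)
    (N : ℕ) (hN : 1 ≤ N) (M : ℕ) (hM : M = max Sig.natDegree (Om.natDegree + N))
    (σ : Fin (M + 1) → ℝ)
    (hσ : Sig = ∑ m : Fin (M + 1), Polynomial.C (σ m) * Polynomial.Chebyshev.T ℝ ((m : ℕ) : ℤ))
    (α : ℕ → ℂ)
    (hα : ∀ ℓ, α ℓ = (1 / 2) * Complex.exp (Complex.I *
      (((Real.arccos (a ℓ) + Real.arccos (b ℓ)) / 2 : ℝ) : ℂ)))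
    (β : ℕ → ℝ)
    (hβ : ∀ ℓ, β ℓ = Real.cos ((Real.arccos (a ℓ) - Real.arccos (b ℓ)) / 2)) :
    (∀ (P : Polynomial ℝ) (c : ℝ), P.natDegree ≤ N →
      ∀ τ : Fin (M + 1) → ℝ,
        Om * P = ∑ m : Fin (M + 1), Polynomial.C (τ m) * Polynomial.Chebyshev.T ℝ ((m : ℕ) : ℤ) →
      ((∀ ℓ < L, ∀ x ∈ Set.Icc (a ℓ) (b ℓ), |Om.eval x * P.eval x / Sig.eval x| ≤ c) ↔
        (∀ ℓ < L, ∀ e : ℝ, e = 1 ∨ e = -1 →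
          SdpCert M (α ℓ) (β ℓ) (fun m => σ m * c + e * τ m))))
    ∧
    sInf { c : ℝ | ∃ P : Polynomial ℝ, P.Monic ∧ P.natDegree = N ∧
        ∃ τ : Fin (M + 1) → ℝ,
          Om * P = ∑ m : Fin (M + 1), Polynomial.C (τ m) * Polynomial.Chebyshev.T ℝ ((m : ℕ) : ℤ) ∧
          ∀ ℓ < L, ∀ e : ℝ, e = 1 ∨ e = -1 →
            SdpCert M (α ℓ) (β ℓ) (fun m => σ m * c + e * τ m) }
      = sInf { r : ℝ | ∃ P : Polynomial ℝ, P.Monic ∧ P.natDegree = N ∧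
          r = sSup ((fun x => |Om.eval x * P.eval x / Sig.eval x|) ''
            (⋃ ℓ ∈ Finset.range L, Set.Icc (a ℓ) (b ℓ))) } := by
  have hmono {k ℓ : ℕ} := le_and_le_of_interlacing (k := k) (ℓ := ℓ)
    (fun ℓ hℓ => (hab ℓ hℓ).le) fun ℓ hℓ => (hgap ℓ hℓ).le
  have ha (ℓ : ℕ) (hℓ : ℓ < L) : -1 ≤ a ℓ := ha0 ▸ (hmono ℓ.zero_le hℓ).1
  have hb (ℓ : ℕ) (hℓ : ℓ < L) : b ℓ ≤ 1 :=
    hbL ▸ (hmono (Nat.le_sub_one_of_lt hℓ) (Nat.sub_one_lt_of_lt hℓ)).2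
  simp only [← Finset.mem_range] at ha hb hab hSig ⊢
  obtain ⟨hcert, hmin⟩ := chebyshev_first_kind_sdp_general (Finset.nonempty_range_iff.2 hL.ne') ha
    hab hb hSig (hM ▸ le_max_right _ _) hσ hα hβ
  exact ⟨fun P c _ => hcert P c, hmin⟩
end

section
/- Let K = ⋃_{ℓ=1}^L [a_ℓ, b_ℓ] ⊆ [−1,1] with −1 = a_1 < b_1 < a_2 < ⋯ < a_L < b_L = 1, let w be continuous and strictly positive on K, and let P be a real polynomial of degree at most N. Then lim_{d→∞} sslash P sslash_d = ‖P/w‖_{L1(K)}. -/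
open MeasureTheory Filter Polynomial

/-- The `(d+1) × (d+1)` symmetric Toeplitz matrix built from a vector `y ∈ ℝ^{d+1}`,
with entries `y_{|i−j|}`. -/
noncomputable def toepFin (d : ℕ) (y : Fin (d + 1) → ℝ) :
    Matrix (Fin (d + 1)) (Fin (d + 1)) ℝ :=
  fun i j => y ⟨(((i : ℕ) : ℤ) - ((j : ℕ) : ℤ)).natAbs, by omega⟩

/-- The transplantation `P_ℓ(x) = P(((bℓ−aℓ)x + aℓ + bℓ)/2)` of a polynomial
from `[aℓ, bℓ]` to `[-1, 1]`. -/
noncomputable def transplant (aℓ bℓ : ℝ) (P : Polynomial ℝ) : Polynomial ℝ :=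
  P.comp (Polynomial.C ((bℓ - aℓ) / 2) * Polynomial.X + Polynomial.C ((aℓ + bℓ) / 2))

/-- The entries `J^ℓ_{k,n} = ∫_0^π cos(kθ) sin((n+1)θ) / w_ℓ(cos θ) dθ`, where
`w_ℓ(x) = w(((bℓ−aℓ)x + aℓ + bℓ)/2)` is the transplantation of the weight `w`. -/
noncomputable def Jent (aℓ bℓ : ℝ) (w : ℝ → ℝ) (k n : ℕ) : ℝ :=
  ∫ θ in (0:ℝ)..Real.pi,
    Real.cos (k * θ) * Real.sin ((n + 1) * θ) /
      w (((bℓ - aℓ) * Real.cos θ + aℓ + bℓ) / 2)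

/-- The weighted `L1` norm `‖P/w‖_{L1(K)} = ∑_ℓ ∫_{a_ℓ}^{b_ℓ} |P(t)|/w(t) dt`
on `K = ⋃_{ℓ<L} [a ℓ, b ℓ]`. -/
noncomputable def L1K (L : ℕ) (a b : ℕ → ℝ) (w : ℝ → ℝ) (P : Polynomial ℝ) : ℝ :=
  ∑ ℓ ∈ Finset.range L, ∫ t in (a ℓ)..(b ℓ), |P.eval t| / w t

/-- The ersatz norm `⫽P⫽_d`: the infimum of
`∑_ℓ ((b_ℓ−a_ℓ)/2)(y^{ℓ,+}_0 + y^{ℓ,−}_0)` over vectors `y^{ℓ,±} ∈ ℝ^{d+1}` with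
`y^{ℓ,+} − y^{ℓ,−} = J^{ℓ,d} W^ℓ p` and `Toep_d(y^{ℓ,±}) ⪰ 0`, where `q ℓ = W^ℓ p` is
the vector of second-kind Chebyshev coefficients of the transplantation `P_ℓ`. -/
noncomputable def ersatz (L N d : ℕ) (a b : ℕ → ℝ) (w : ℝ → ℝ) (P : Polynomial ℝ) : ℝ :=
  sInf { s : ℝ |
    ∃ q : ℕ → Fin (N + 1) → ℝ,
      (∀ ℓ < L, transplant (a ℓ) (b ℓ) P
          = ∑ n : Fin (N + 1), Polynomial.C (q ℓ n) * Polynomial.Chebyshev.U ℝ ((n : ℕ) : ℤ)) ∧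
      ∃ yp ym : ℕ → Fin (d + 1) → ℝ,
        (∀ ℓ < L, ∀ k : Fin (d + 1),
            yp ℓ k - ym ℓ k
              = ∑ n : Fin (N + 1), Jent (a ℓ) (b ℓ) w (k : ℕ) (n : ℕ) * q ℓ n) ∧
        (∀ ℓ < L, (toepFin d (yp ℓ)).PosSemidef ∧ (toepFin d (ym ℓ)).PosSemidef) ∧
        s = ∑ ℓ ∈ Finset.range L, ((b ℓ - a ℓ) / 2) * (yp ℓ 0 + ym ℓ 0) }

/-!
Substituting `t = ((b - a) cos θ + a + b) / 2` on each interval turns the ersatz constraints into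
`y⁺ - y⁻ = m`, where `m` is the vector of the first `d + 1` cosine moments of a continuous function
`f` on `[0, π]`, and turns `‖P/w‖_{L1(K)}` into a weighted sum of the integrals `∫ |f|`.
The moments of the positive and negative parts of `f` are feasible and cost exactly `∫ |f|`.
Conversely, Fejér summation is linear in the moments and sends a vector `y` with positive
semidefinite Toeplitz matrix to a nonnegative function of integral `y 0`; hence every feasible pair
costs at least `∫ |σ f|`, where `σ f` is the `d`-th Fejér mean of `f`, and `σ f → f` uniformly by
Fejér's theorem.
-/

section

open Real Set

theorem intervalIntegral_sum_sum {ι κ E : Type*} [NormedAddCommGroup E] [NormedSpace ℝ E]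
    {s : Finset ι} {t : Finset κ} {a b : ℝ} {μ : Measure ℝ} {f : ι → κ → ℝ → E}
    (hf : ∀ i ∈ s, ∀ j ∈ t, IntervalIntegrable (f i j) μ a b) :
    ∫ x in a..b, ∑ i ∈ s, ∑ j ∈ t, f i j x ∂μ = ∑ i ∈ s, ∑ j ∈ t, ∫ x in a..b, f i j x ∂μ := by
  simp only [← Finset.sum_product']
  exact intervalIntegral.integral_finsetSum fun p hp =>
    hf p.1 (Finset.mem_product.1 hp).1 p.2 (Finset.mem_product.1 hp).2

theorem sum_mul_cos_sub_nonneg {ι : Type*} [Fintype ι] {M : Matrix ι ι ℝ} (hM : M.PosSemidef)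
    (x : ι → ℝ) : 0 ≤ ∑ i, ∑ j, M i j * cos (x i - x j) := by
  have h := add_nonneg (hM.dotProduct_mulVec_nonneg fun i => cos (x i))
    (hM.dotProduct_mulVec_nonneg fun i => sin (x i))
  simp only [dotProduct, Matrix.mulVec, Pi.star_apply, star_trivial, Finset.mul_sum,
    ← Finset.sum_add_distrib] at h
  refine h.trans_eq (Finset.sum_congr rfl fun i _ => Finset.sum_congr rfl fun j _ => ?_)
  rw [cos_sub]
  ring

theorem integral_cos_int_mul (m : ℤ) :
    ∫ θ in (0 : ℝ)..π, cos (m * θ) = if m = 0 then π else 0 := by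
  simp_rw [← Chebyshev.T_real_cos]
  rw [← Chebyshev.integral_measureT_eq_integral_cos (f := fun x => (Chebyshev.T ℝ m).eval x)]
  split_ifs with hm
  · rw [hm, Chebyshev.integral_eval_T_real_measureT_zero]
  · exact Chebyshev.integral_eval_T_real_measureT_of_ne_zero hm

theorem integral_cos_int_mul_mul_cos_int_mul (m k : ℤ) :
    ∫ θ in (0 : ℝ)..π, cos (m * θ) * cos (k * θ)
      = π / 2 * ((if m = k then 1 else 0) + if -m = k then 1 else 0) := by
  have product_to_sum (θ : ℝ) : cos (m * θ) * cos (k * θ)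
      = (cos ((m - k : ℤ) * θ) + cos ((m + k : ℤ) * θ)) / 2 := by
    push_cast
    rw [sub_mul, add_mul, ← two_mul_cos_mul_cos]
    ring
  simp_rw [product_to_sum]
  rw [intervalIntegral.integral_div, intervalIntegral.integral_add
    (Continuous.intervalIntegrable (by fun_prop) _ _)
    (Continuous.intervalIntegrable (by fun_prop) _ _), integral_cos_int_mul, integral_cos_int_mul]
  simp only [sub_eq_zero, ← neg_eq_iff_add_eq_zero]
  split_ifs <;> ring

/-- The vector of cosine moments `∫₀^π cos (kθ) f(θ) dθ`, `k = 0, …, d`. -/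
noncomputable def cosMoment (d : ℕ) (f : ℝ → ℝ) (k : Fin (d + 1)) : ℝ :=
  ∫ θ in (0 : ℝ)..π, cos ((k : ℕ) * θ) * f θ

/-- The density on `[0, π]` attached to a truncated moment vector `y` by Fejér summation. Up to
normalization it is the Toeplitz form of `y` at the vector `(exp (i k θ))ₖ`, which makes it
nonnegative when `toepFin d y` is positive semidefinite. -/
noncomputable def fejerDensity (d : ℕ) : (Fin (d + 1) → ℝ) →ₗ[ℝ] ℝ → ℝ where
  toFun y θ := (π * (d + 1))⁻¹ *
    ∑ i : Fin (d + 1), ∑ j : Fin (d + 1), toepFin d y i j * cos (((i : ℝ) - j) * θ)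
  map_add' y z := by
    ext θ
    simp only [toepFin, Pi.add_apply, add_mul, Finset.sum_add_distrib, mul_add]
  map_smul' c y := by
    ext θ
    simp only [toepFin, Pi.smul_apply, smul_eq_mul, mul_assoc, RingHom.id_apply, Finset.mul_sum,
      mul_left_comm c]

/-- The `d`-th Fejér mean of the even `2π`-periodic extension of `f : [0, π] → ℝ`. -/
noncomputable def fejerMean (d : ℕ) (f : ℝ → ℝ) : ℝ → ℝ :=
  fejerDensity d (cosMoment d f)

section Toeplitz

variable {d : ℕ} {y z : Fin (d + 1) → ℝ}

theorem fejerDensity_apply (y : Fin (d + 1) → ℝ) (θ : ℝ) :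
    fejerDensity d y θ = (π * (d + 1))⁻¹ *
      ∑ i : Fin (d + 1), ∑ j : Fin (d + 1), toepFin d y i j * cos (((i : ℝ) - j) * θ) :=
  rfl

theorem continuous_fejerDensity (y : Fin (d + 1) → ℝ) : Continuous (fejerDensity d y) := by
  unfold fejerDensity
  exact continuous_const.mul (by fun_prop)

theorem fejerDensity_nonneg (hy : (toepFin d y).PosSemidef) (θ : ℝ) :
    0 ≤ fejerDensity d y θ := by
  rw [fejerDensity_apply]
  refine mul_nonneg (by positivity) ?_
  simpa only [sub_mul] using sum_mul_cos_sub_nonneg hy fun i => (i : ℝ) * θ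

theorem toepFin_apply_self (y : Fin (d + 1) → ℝ) (i : Fin (d + 1)) : toepFin d y i i = y 0 := by
  simp [toepFin]

theorem integral_fejerDensity (y : Fin (d + 1) → ℝ) :
    ∫ θ in (0 : ℝ)..π, fejerDensity d y θ = y 0 := by
  have integral_cos_sub (i j : Fin (d + 1)) :
      ∫ θ in (0 : ℝ)..π, cos (((i : ℝ) - j) * θ) = if i = j then π else 0 := by
    have h := integral_cos_int_mul ((i : ℤ) - (j : ℤ))
    push_cast at h
    rw [h]
    congr 1
    rw [sub_eq_zero, Nat.cast_inj, Fin.val_inj]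
  simp only [fejerDensity_apply, intervalIntegral.integral_const_mul]
  rw [intervalIntegral_sum_sum fun i _ j _ => Continuous.intervalIntegrable (by fun_prop) _ _]
  simp only [intervalIntegral.integral_const_mul, integral_cos_sub, mul_ite, mul_zero,
    Finset.sum_ite_eq, Finset.mem_univ, if_true, toepFin_apply_self, Finset.sum_const,
    Finset.card_univ, Fintype.card_fin, nsmul_eq_mul]
  push_cast
  field_simp

theorem integral_abs_fejerDensity_sub_le (hy : (toepFin d y).PosSemidef)
    (hz : (toepFin d z).PosSemidef) :
    ∫ θ in (0 : ℝ)..π, |fejerDensity d (y - z) θ| ≤ y 0 + z 0 := by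
  have hc := continuous_fejerDensity y
  have hc' := continuous_fejerDensity z
  calc ∫ θ in (0 : ℝ)..π, |fejerDensity d (y - z) θ|
      ≤ ∫ θ in (0 : ℝ)..π, (fejerDensity d y θ + fejerDensity d z θ) := by
        refine intervalIntegral.integral_mono pi_nonneg
          ((continuous_fejerDensity _).abs.intervalIntegrable _ _)
          ((hc.add hc').intervalIntegrable _ _) fun θ => ?_
        rw [map_sub, Pi.sub_apply]
        refine (abs_sub _ _).trans_eq ?_
        rw [abs_of_nonneg (fejerDensity_nonneg hy θ), abs_of_nonneg (fejerDensity_nonneg hz θ)]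
    _ = y 0 + z 0 := by
        rw [intervalIntegral.integral_add (hc.intervalIntegrable _ _) (hc'.intervalIntegrable _ _),
          integral_fejerDensity, integral_fejerDensity]

end Toeplitz

section CosMoment

variable {d : ℕ} {f g : ℝ → ℝ}

theorem intervalIntegrable_cos_mul (hf : IntervalIntegrable f volume 0 π) (c : ℝ) :
    IntervalIntegrable (fun θ => cos (c * θ) * f θ) volume 0 π :=
  hf.continuousOn_mul (Continuous.continuousOn (by fun_prop))

theorem toepFin_cosMoment (f : ℝ → ℝ) (i j : Fin (d + 1)) :
    toepFin d (cosMoment d f) i j = ∫ θ in (0 : ℝ)..π, cos (((i : ℝ) - j) * θ) * f θ := by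
  unfold toepFin cosMoment
  congr! 3 with θ
  rw [Nat.cast_natAbs, Int.cast_abs, ← cos_abs, abs_mul, abs_abs, ← abs_mul, cos_abs]
  push_cast
  rfl

theorem isHermitian_toepFin (y : Fin (d + 1) → ℝ) : (toepFin d y).IsHermitian := by
  ext i j
  simp only [Matrix.conjTranspose_apply, star_trivial, toepFin, ← Int.natAbs_neg ((i : ℤ) - j),
    neg_sub]

theorem posSemidef_toepFin_cosMoment (hf : IntervalIntegrable f volume 0 π)
    (hf0 : ∀ θ ∈ Icc 0 π, 0 ≤ f θ) : (toepFin d (cosMoment d f)).PosSemidef := by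
  refine .of_dotProduct_mulVec_nonneg (isHermitian_toepFin _) fun v => ?_
  have hint (i j : Fin (d + 1)) : IntervalIntegrable
      (fun θ => v i * v j * cos ((i : ℝ) * θ - j * θ) * f θ) volume 0 π :=
    hf.continuousOn_mul (Continuous.continuousOn (by fun_prop))
  have quadratic_form : star v ⬝ᵥ (toepFin d (cosMoment d f)).mulVec v = ∫ θ in (0 : ℝ)..π,
      (∑ i : Fin (d + 1), ∑ j : Fin (d + 1),
        Matrix.vecMulVec v (star v) i j * cos ((i : ℝ) * θ - j * θ)) * f θ := by
    simp only [dotProduct, Matrix.mulVec, Matrix.vecMulVec_apply, star_trivial, Finset.mul_sum,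
      Finset.sum_mul]
    rw [intervalIntegral_sum_sum fun i _ j _ => hint i j]
    refine Finset.sum_congr rfl fun i _ => Finset.sum_congr rfl fun j _ => ?_
    simp only [toepFin_cosMoment, mul_assoc, intervalIntegral.integral_const_mul, sub_mul]
    ring
  rw [quadratic_form]
  exact intervalIntegral.integral_nonneg pi_nonneg fun θ hθ => mul_nonneg
    (sum_mul_cos_sub_nonneg (Matrix.posSemidef_vecMulVec_self_star v) fun i => (i : ℝ) * θ)
    (hf0 θ hθ)

theorem cosMoment_add (hf : IntervalIntegrable f volume 0 π)
    (hg : IntervalIntegrable g volume 0 π) :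
    cosMoment d (f + g) = cosMoment d f + cosMoment d g := by
  ext k
  simp only [cosMoment, Pi.add_apply, mul_add]
  exact intervalIntegral.integral_add (intervalIntegrable_cos_mul hf _)
    (intervalIntegrable_cos_mul hg _)

theorem cosMoment_smul (c : ℝ) (f : ℝ → ℝ) : cosMoment d (c • f) = c • cosMoment d f := by
  ext k
  simp only [cosMoment, Pi.smul_apply, smul_eq_mul, mul_left_comm _ c,
    intervalIntegral.integral_const_mul]

end CosMoment

theorem sum_sum_ite_sub_eq {n k : ℕ} (hk : k ≤ n) :
    ∑ i : Fin n, ∑ j : Fin n, (if (i : ℤ) - j = k then (1 : ℝ) else 0) = n - k := by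
  have column (j : Fin n) : ∑ i : Fin n, (if (i : ℤ) - j = k then (1 : ℝ) else 0)
      = if (j : ℕ) ∈ Finset.range (n - k) then 1 else 0 := by
    rw [Fin.sum_univ_eq_sum_range fun i => if (i : ℤ) - j = k then (1 : ℝ) else 0]
    simp only [sub_eq_iff_eq_add, ← Nat.cast_add, Nat.cast_inj, Finset.sum_ite_eq',
      Finset.mem_range, Nat.lt_sub_iff_add_lt']
  rw [Finset.sum_comm, Finset.sum_congr rfl fun j _ => column j,
    Fin.sum_univ_eq_sum_range fun j => if j ∈ Finset.range (n - k) then (1 : ℝ) else 0,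
    Finset.sum_ite_mem, Finset.inter_eq_right.2 (Finset.range_mono (Nat.sub_le n k))]
  simp [Nat.cast_sub hk]

section FejerMean

variable {d : ℕ} {f g : ℝ → ℝ}

theorem fejerMean_add (hf : IntervalIntegrable f volume 0 π)
    (hg : IntervalIntegrable g volume 0 π) :
    fejerMean d (f + g) = fejerMean d f + fejerMean d g := by
  rw [fejerMean, cosMoment_add hf hg, map_add]
  rfl

theorem fejerMean_smul (c : ℝ) (f : ℝ → ℝ) : fejerMean d (c • f) = c • fejerMean d f := by
  rw [fejerMean, cosMoment_smul, map_smul]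
  rfl

theorem fejerMean_nonneg (hf : IntervalIntegrable f volume 0 π) (hf0 : ∀ θ ∈ Icc 0 π, 0 ≤ f θ)
    (θ : ℝ) : 0 ≤ fejerMean d f θ :=
  fejerDensity_nonneg (posSemidef_toepFin_cosMoment hf hf0) θ

theorem fejerMean_mono (hf : IntervalIntegrable f volume 0 π)
    (hg : IntervalIntegrable g volume 0 π) (hfg : ∀ θ ∈ Icc 0 π, f θ ≤ g θ) (θ : ℝ) :
    fejerMean d f θ ≤ fejerMean d g θ := by
  have hgf : IntervalIntegrable (g - f) volume 0 π := hg.sub hf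
  have h : fejerMean d g = fejerMean d f + fejerMean d (g - f) := by
    rw [← fejerMean_add hf hgf, add_sub_cancel]
  rw [h]
  exact le_add_of_nonneg_right (fejerMean_nonneg hgf (fun θ hθ => sub_nonneg.2 (hfg θ hθ)) θ)

theorem fejerMean_cos {k : ℕ} (hk : k ≤ d + 1) :
    fejerMean d (fun θ => cos (k * θ)) = fun θ => (1 - k / (d + 1)) * cos (k * θ) := by
  ext θ
  have entry (i j : Fin (d + 1)) :
      toepFin d (cosMoment d fun φ => cos (k * φ)) i j * cos (((i : ℝ) - j) * θ)
        = π / 2 * cos (k * θ) * ((if (i : ℤ) - j = k then 1 else 0)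
          + if (j : ℤ) - i = k then 1 else 0) := by
    have h := integral_cos_int_mul_mul_cos_int_mul ((i : ℤ) - j) k
    push_cast at h
    rw [toepFin_cosMoment, h, neg_sub]
    by_cases hij : (i : ℤ) - j = k ∨ (j : ℤ) - i = k
    · have hcos : cos (((i : ℝ) - j) * θ) = cos (k * θ) := by
        rcases hij with hij | hij
        · rw [show (i : ℝ) - j = k by exact_mod_cast hij]
        · rw [← cos_neg, ← neg_mul, neg_sub, show (j : ℝ) - i = k by exact_mod_cast hij]
      rw [hcos]
      ring
    · rw [if_neg (not_or.1 hij).1, if_neg (not_or.1 hij).2]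
      ring
  have count := sum_sum_ite_sub_eq hk
  have count' := count
  rw [Finset.sum_comm] at count'
  simp only [fejerMean, fejerDensity_apply, entry, ← Finset.mul_sum, Finset.sum_add_distrib,
    count, count']
  push_cast
  field_simp
  ring

theorem fejerMean_const (c θ : ℝ) : fejerMean d (fun _ => c) θ = c := by
  have h := congr_fun (fejerMean_cos (Nat.zero_le (d + 1))) θ
  have hc : (fun _ : ℝ => c) = c • fun θ : ℝ => cos ((0 : ℕ) * θ) := by ext; simp
  rw [hc, fejerMean_smul, Pi.smul_apply, h]
  simp

theorem abs_fejerMean_sub_le {C : ℝ} (hf : IntervalIntegrable f volume 0 π)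
    (hg : IntervalIntegrable g volume 0 π) (hfg : ∀ θ ∈ Icc 0 π, |f θ - g θ| ≤ C) (θ : ℝ) :
    |fejerMean d f θ - fejerMean d g θ| ≤ C := by
  have le_add {u v : ℝ → ℝ} (hu : IntervalIntegrable u volume 0 π)
      (hv : IntervalIntegrable v volume 0 π) (huv : ∀ θ ∈ Icc 0 π, u θ ≤ v θ + C) :
      fejerMean d u θ ≤ fejerMean d v θ + C := by
    have hC : IntervalIntegrable (fun _ : ℝ => C) volume 0 π := intervalIntegrable_const
    have hvC : IntervalIntegrable (v + fun _ => C) volume 0 π := hv.add hC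
    calc fejerMean d u θ ≤ fejerMean d (v + fun _ => C) θ := fejerMean_mono hu hvC huv θ
      _ = fejerMean d v θ + C := by rw [fejerMean_add hv hC, Pi.add_apply, fejerMean_const]
  refine abs_sub_le_iff.2 ⟨?_, ?_⟩
  · exact sub_le_iff_le_add'.2 (le_add hf hg fun θ hθ =>
      sub_le_iff_le_add'.1 (abs_sub_le_iff.1 (hfg θ hθ)).1)
  · exact sub_le_iff_le_add'.2 (le_add hg hf fun θ hθ =>
      sub_le_iff_le_add'.1 (abs_sub_le_iff.1 (hfg θ hθ)).2)

theorem tendstoUniformly_fejerMean_cos (k : ℕ) :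
    TendstoUniformly (fun d => fejerMean d fun θ => cos (k * θ)) (fun θ => cos (k * θ)) atTop := by
  rw [Metric.tendstoUniformly_iff]
  intro ε hε
  have hlim : Tendsto (fun d : ℕ => (k : ℝ) / (d + 1)) atTop (nhds 0) :=
    tendsto_const_nhds.div_atTop (tendsto_atTop_add_const_right _ _ tendsto_natCast_atTop_atTop)
  filter_upwards [hlim.eventually_lt_const hε, eventually_ge_atTop k] with d hd hkd θ
  rw [fejerMean_cos (by omega), Real.dist_eq]
  calc |cos (k * θ) - (1 - k / (d + 1)) * cos (k * θ)|
      = k / (d + 1) * |cos (k * θ)| := by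
        rw [← abs_of_nonneg (by positivity : (0 : ℝ) ≤ k / (d + 1)), ← abs_mul,
          abs_of_nonneg (by positivity : (0 : ℝ) ≤ k / (d + 1))]
        ring_nf
    _ ≤ k / (d + 1) := mul_le_of_le_one_right (by positivity) (abs_cos_le_one _)
    _ < ε := hd

theorem tendstoUniformly_fejerMean_eval_cos (p : ℝ[X]) :
    TendstoUniformly (fun d => fejerMean d fun θ => p.eval (cos θ)) (fun θ => p.eval (cos θ))
      atTop := by
  have hp : p ∈ Submodule.span ℝ (range (Chebyshev.chebyshevTsequence ℝ)) := by
    rw [(Chebyshev.chebyshevTsequence ℝ).span fun k => isUnit_iff_ne_zero.2 (by simp)]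
    exact Submodule.mem_top
  induction hp using Submodule.span_induction with
  | mem _ h =>
    obtain ⟨k, rfl⟩ := h
    have eval_T (θ : ℝ) : (Chebyshev.chebyshevTsequence ℝ k).eval (cos θ) = cos (k * θ) :=
      Chebyshev.T_real_cos θ k
    simpa only [eval_T] using tendstoUniformly_fejerMean_cos k
  | zero =>
    simp only [eval_zero]
    exact Metric.tendstoUniformly_iff.2 fun ε hε => .of_forall fun d θ => by
      rwa [fejerMean_const, dist_self]
  | add p q _ _ ihp ihq =>
    have integrable (r : ℝ[X]) : IntervalIntegrable (fun θ => r.eval (cos θ)) volume 0 π :=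
      Continuous.intervalIntegrable (by fun_prop) _ _
    have mean_add (d : ℕ) : fejerMean d (fun θ => (p + q).eval (cos θ))
        = fejerMean d (fun θ => p.eval (cos θ)) + fejerMean d fun θ => q.eval (cos θ) := by
      rw [← fejerMean_add (integrable p) (integrable q)]
      simp only [eval_add, Pi.add_def]
    convert ihp.add ihq using 1
    · exact funext mean_add
    · exact funext fun θ => eval_add
  | smul c p _ ih =>
    have mean_smul (d : ℕ) : fejerMean d (fun θ => (c • p).eval (cos θ))
        = c • fejerMean d fun θ => p.eval (cos θ) := by
      rw [← fejerMean_smul]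
      simp only [eval_smul, Pi.smul_def]
    convert (uniformContinuous_const_smul c).comp_tendstoUniformly ih using 1
    · exact funext mean_smul
    · exact funext fun θ => eval_smul c p _

theorem tendstoUniformlyOn_fejerMean (hf : ContinuousOn f (Icc 0 π)) :
    TendstoUniformlyOn (fun d => fejerMean d f) f atTop (Icc 0 π) := by
  rw [Metric.tendstoUniformlyOn_iff]
  intro ε hε
  have hfarccos : ContinuousOn (fun x => f (arccos x)) (Icc (-1) 1) :=
    hf.comp continuous_arccos.continuousOn fun x _ => ⟨arccos_nonneg x, arccos_le_pi x⟩
  obtain ⟨p, hp⟩ := exists_polynomial_near_of_continuousOn (-1) 1 _ hfarccos (ε / 3) (by positivity)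
  have hpf (θ : ℝ) (hθ : θ ∈ Icc 0 π) : |p.eval (cos θ) - f θ| < ε / 3 := by
    simpa only [arccos_cos hθ.1 hθ.2] using hp (cos θ) (cos_mem_Icc θ)
  have hfint : IntervalIntegrable f volume 0 π := hf.intervalIntegrable_of_Icc pi_nonneg
  have hpint : IntervalIntegrable (fun θ => p.eval (cos θ)) volume 0 π :=
    Continuous.intervalIntegrable (by fun_prop) _ _
  filter_upwards [Metric.tendstoUniformly_iff.1 (tendstoUniformly_fejerMean_eval_cos p) (ε / 3)
    (by positivity)] with d hd θ hθ
  have h₁ := abs_lt.1 (hpf θ hθ)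
  have h₂ := abs_lt.1 (hd θ)
  have h₃ := abs_le.1 (abs_fejerMean_sub_le (d := d) hpint hfint (fun φ hφ => (hpf φ hφ).le) θ)
  rw [Real.dist_eq, abs_lt]
  constructor <;> linarith

theorem tendsto_integral_abs_fejerMean (hf : ContinuousOn f (Icc 0 π)) :
    Tendsto (fun d => ∫ θ in (0 : ℝ)..π, |fejerMean d f θ|) atTop
      (nhds (∫ θ in (0 : ℝ)..π, |f θ|)) := by
  refine TendstoUniformlyOn.tendsto_intervalIntegral_of_continuousOn
    (.of_forall fun d => (continuous_fejerDensity _).abs.continuousOn) ?_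
  rw [uIcc_of_le pi_nonneg]
  exact Real.uniformContinuous_abs.comp_tendstoUniformlyOn (tendstoUniformlyOn_fejerMean hf)

end FejerMean

section Splitting

variable {ι : Type*} {s : Finset ι} {c : ι → ℝ} {d : ℕ}

/-- The costs `∑ i ∈ s, c i * (y i 0 + z i 0)` of all ways to write the cosine moment vectors of
the functions `f i`, `i ∈ s`, as differences `y i - z i` of vectors with positive semidefinite
Toeplitz matrices. The ersatz norm is the infimum of such a set. -/
def splittingCosts (s : Finset ι) (c : ι → ℝ) (d : ℕ) (f : ι → ℝ → ℝ) : Set ℝ :=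
  {r | ∃ y z : ι → Fin (d + 1) → ℝ,
    (∀ i ∈ s, y i - z i = cosMoment d (f i)) ∧
    (∀ i ∈ s, (toepFin d (y i)).PosSemidef ∧ (toepFin d (z i)).PosSemidef) ∧
    r = ∑ i ∈ s, c i * (y i 0 + z i 0)}

theorem cosMoment_apply_zero (f : ℝ → ℝ) : cosMoment d f 0 = ∫ θ in (0 : ℝ)..π, f θ := by
  simp [cosMoment]

theorem sum_integral_abs_mem_splittingCosts {f : ι → ℝ → ℝ} (c : ι → ℝ)
    (hf : ∀ i ∈ s, IntervalIntegrable (f i) volume 0 π) :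
    ∑ i ∈ s, c i * ∫ θ in (0 : ℝ)..π, |f i θ| ∈ splittingCosts s c d f := by
  have hpos (i : ι) (hi : i ∈ s) : IntervalIntegrable (f i)⁺ volume 0 π :=
    ⟨(hf i hi).1.pos_part, (hf i hi).2.pos_part⟩
  have hneg (i : ι) (hi : i ∈ s) : IntervalIntegrable (f i)⁻ volume 0 π :=
    ⟨(hf i hi).1.neg_part, (hf i hi).2.neg_part⟩
  refine ⟨fun i => cosMoment d (f i)⁺, fun i => cosMoment d (f i)⁻, fun i hi => ?_,
    fun i hi => ⟨?_, ?_⟩, Finset.sum_congr rfl fun i hi => ?_⟩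
  · rw [sub_eq_iff_eq_add, ← cosMoment_add (hf i hi) (hneg i hi),
      ← sub_eq_iff_eq_add.1 (posPart_sub_negPart (f i))]
  · exact posSemidef_toepFin_cosMoment (hpos i hi) fun θ _ => posPart_nonneg (f i) θ
  · exact posSemidef_toepFin_cosMoment (hneg i hi) fun θ _ => negPart_nonneg (f i) θ
  · rw [← Pi.add_apply, ← cosMoment_add (hpos i hi) (hneg i hi), posPart_add_negPart,
      cosMoment_apply_zero]
    rfl

theorem sum_integral_abs_fejerMean_le_of_mem_splittingCosts {f : ι → ℝ → ℝ} {r : ℝ}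
    (hc : ∀ i ∈ s, 0 ≤ c i) (hr : r ∈ splittingCosts s c d f) :
    ∑ i ∈ s, c i * ∫ θ in (0 : ℝ)..π, |fejerMean d (f i) θ| ≤ r := by
  obtain ⟨y, z, hyz, hpsd, rfl⟩ := hr
  refine Finset.sum_le_sum fun i hi => mul_le_mul_of_nonneg_left ?_ (hc i hi)
  rw [fejerMean, ← hyz i hi]
  exact integral_abs_fejerDensity_sub_le (hpsd i hi).1 (hpsd i hi).2

theorem tendsto_sInf_splittingCosts {f : ι → ℝ → ℝ} (hc : ∀ i ∈ s, 0 ≤ c i)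
    (hf : ∀ i ∈ s, ContinuousOn (f i) (Icc 0 π)) :
    Tendsto (fun d => sInf (splittingCosts s c d f)) atTop
      (nhds (∑ i ∈ s, c i * ∫ θ in (0 : ℝ)..π, |f i θ|)) := by
  have feasible (d : ℕ) := sum_integral_abs_mem_splittingCosts (d := d) c fun i hi =>
    (hf i hi).intervalIntegrable_of_Icc pi_nonneg
  have lower (d : ℕ) (r : ℝ) (hr : r ∈ splittingCosts s c d f) :=
    sum_integral_abs_fejerMean_le_of_mem_splittingCosts hc hr
  exact tendsto_of_tendsto_of_tendsto_of_le_of_le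
    (tendsto_finsetSum s fun i hi => (tendsto_integral_abs_fejerMean (hf i hi)).const_mul (c i))
    tendsto_const_nhds (fun d => le_csInf ⟨_, feasible d⟩ (lower d))
    fun d => csInf_le ⟨_, lower d⟩ (feasible d)

end Splitting

theorem exists_eq_sum_C_mul_of_natDegree_le {𝕜 : Type*} [Field 𝕜] (S : Polynomial.Sequence 𝕜)
    {N : ℕ} {p : 𝕜[X]} (hp : p.natDegree ≤ N) :
    ∃ q : Fin (N + 1) → 𝕜, p = ∑ n : Fin (N + 1), C (q n) * S n := by
  have hrange : range (fun n : Fin (N + 1) => S n) = S '' Iic N := by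
    ext r
    simp [Fin.exists_iff]
  have hmem : p ∈ Submodule.span 𝕜 (range fun n : Fin (N + 1) => S n) := by
    rw [hrange, S.span_degreeLE fun n _ => isUnit_iff_ne_zero.2 (by simp), mem_degreeLE]
    exact natDegree_le_iff_degree_le.1 hp
  obtain ⟨q, hq⟩ := (Submodule.mem_span_range_iff_exists_fun 𝕜).1 hmem
  exact ⟨q, by simp only [← hq, smul_eq_C_mul]⟩

theorem exists_eq_sum_C_mul_chebyshevU {N : ℕ} {p : ℝ[X]} (hp : p.natDegree ≤ N) :
    ∃ q : Fin (N + 1) → ℝ, p = ∑ n : Fin (N + 1), C (q n) * Chebyshev.U ℝ ((n : ℕ) : ℤ) :=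
  exists_eq_sum_C_mul_of_natDegree_le
    ⟨fun n => Chebyshev.U ℝ n, Chebyshev.degree_U_natCast ℝ⟩ hp

theorem natDegree_transplant_le (a b : ℝ) (P : ℝ[X]) :
    (transplant a b P).natDegree ≤ P.natDegree :=
  natDegree_comp_le.trans (mul_le_of_le_one_right' natDegree_linear_le)

section AngularDensity

variable {a b : ℝ} {w : ℝ → ℝ}

/-- The parametrization of `[a, b]` by the angle `θ ∈ [0, π]`, running from `b` to `a`. -/
noncomputable def cosParam (a b θ : ℝ) : ℝ :=
  ((b - a) * cos θ + a + b) / 2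

/-- The function `P / w` on `[a, b]` pulled back to `[0, π]` along `cosParam a b`, times the
Jacobian factor `sin θ`; its cosine moments are the right-hand sides of the ersatz constraints. -/
noncomputable def angularDensity (a b : ℝ) (w : ℝ → ℝ) (P : ℝ[X]) (θ : ℝ) : ℝ :=
  P.eval (cosParam a b θ) * sin θ / w (cosParam a b θ)

theorem eval_transplant_cos (a b : ℝ) (P : ℝ[X]) (θ : ℝ) :
    (transplant a b P).eval (cos θ) = P.eval (cosParam a b θ) := by
  simp only [transplant, cosParam, eval_comp, eval_add, eval_mul, eval_C, eval_X]
  ring_nf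

theorem hasDerivAt_cosParam (a b θ : ℝ) :
    HasDerivAt (cosParam a b) ((b - a) * -sin θ / 2) θ :=
  ((((hasDerivAt_cos θ).const_mul (b - a)).add_const a).add_const b).div_const 2

theorem continuous_cosParam (a b : ℝ) : Continuous (cosParam a b) :=
  continuous_iff_continuousAt.2 fun θ => (hasDerivAt_cosParam a b θ).continuousAt

theorem cosParam_mem_Icc (hab : a ≤ b) (θ : ℝ) : cosParam a b θ ∈ Icc a b := by
  unfold cosParam
  constructor <;> nlinarith [neg_one_le_cos θ, cos_le_one θ]

theorem continuous_div_comp_cosParam (hab : a ≤ b) (hw : ContinuousOn w (Icc a b))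
    (hw0 : ∀ x ∈ Icc a b, w x ≠ 0) {g : ℝ → ℝ} (hg : Continuous g) :
    Continuous fun θ => g θ / w (cosParam a b θ) :=
  hg.div (hw.comp_continuous (continuous_cosParam a b) (cosParam_mem_Icc hab))
    fun θ => hw0 _ (cosParam_mem_Icc hab θ)

theorem continuous_angularDensity (hab : a ≤ b) (hw : ContinuousOn w (Icc a b))
    (hw0 : ∀ x ∈ Icc a b, w x ≠ 0) (P : ℝ[X]) : Continuous (angularDensity a b w P) :=
  continuous_div_comp_cosParam hab hw hw0
    ((P.continuous.comp (continuous_cosParam a b)).mul continuous_sin)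

theorem sum_Jent_mul_eq_cosMoment (hab : a ≤ b) (hw : ContinuousOn w (Icc a b))
    (hw0 : ∀ x ∈ Icc a b, w x ≠ 0) {P : ℝ[X]} {N d : ℕ} {q : Fin (N + 1) → ℝ}
    (hq : transplant a b P = ∑ n : Fin (N + 1), C (q n) * Chebyshev.U ℝ ((n : ℕ) : ℤ))
    (k : Fin (d + 1)) :
    ∑ n : Fin (N + 1), Jent a b w k n * q n = cosMoment d (angularDensity a b w P) k := by
  have expansion (θ : ℝ) :
      P.eval (cosParam a b θ) * sin θ = ∑ n : Fin (N + 1), q n * sin (((n : ℕ) + 1) * θ) := by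
    rw [← eval_transplant_cos, hq, eval_finsetSum, Finset.sum_mul]
    refine Finset.sum_congr rfl fun n _ => ?_
    have hU := Chebyshev.U_real_cos θ (n : ℕ)
    push_cast at hU
    rw [eval_mul, eval_C, mul_assoc, hU]
  change ∑ n : Fin (N + 1), (∫ θ in (0 : ℝ)..π,
    cos ((k : ℕ) * θ) * sin (((n : ℕ) + 1) * θ) / w (cosParam a b θ)) * q n = _
  simp_rw [← intervalIntegral.integral_mul_const]
  rw [← intervalIntegral.integral_finsetSum fun n _ =>
    ((continuous_div_comp_cosParam hab hw hw0 (by fun_prop)).mul_const (q n)).intervalIntegrable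
      _ _]
  refine intervalIntegral.integral_congr fun θ _ => ?_
  simp only [angularDensity, expansion, Finset.sum_div, Finset.mul_sum]
  refine Finset.sum_congr rfl fun n _ => ?_
  ring

theorem half_mul_integral_abs_angularDensity (hab : a ≤ b) (hw : ContinuousOn w (Icc a b))
    (hw0 : ∀ x ∈ Icc a b, 0 < w x) (P : ℝ[X]) :
    (b - a) / 2 * ∫ θ in (0 : ℝ)..π, |angularDensity a b w P θ|
      = ∫ t in a..b, |P.eval t| / w t := by
  have hcont : ContinuousOn (fun t => |P.eval t| / w t) (Icc a b) :=
    P.continuous.abs.continuousOn.div hw fun x hx => (hw0 x hx).ne'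
  have substitution := intervalIntegral.integral_comp_mul_deriv' (a := 0) (b := π)
    (fun θ _ => hasDerivAt_cosParam a b θ) (Continuous.continuousOn (by fun_prop))
    (hcont.mono (image_subset_iff.2 fun θ _ => cosParam_mem_Icc hab θ))
  have hzero : cosParam a b 0 = b := by rw [cosParam, cos_zero]; ring
  have hpi : cosParam a b π = a := by rw [cosParam, cos_pi]; ring
  rw [hzero, hpi, intervalIntegral.integral_symm a b, ← neg_eq_iff_eq_neg] at substitution
  rw [← substitution, ← intervalIntegral.integral_neg,
    ← intervalIntegral.integral_const_mul]
  refine intervalIntegral.integral_congr fun θ hθ => ?_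
  rw [uIcc_of_le pi_nonneg] at hθ
  simp only [angularDensity, Function.comp_apply, abs_div, abs_mul,
    abs_of_nonneg (sin_nonneg_of_mem_Icc hθ), abs_of_pos (hw0 _ (cosParam_mem_Icc hab θ))]
  ring

end AngularDensity

section Ersatz

variable {L N : ℕ} {a b : ℕ → ℝ} {w : ℝ → ℝ} {P : ℝ[X]}

theorem ersatz_eq_sInf_splittingCosts (d : ℕ) (hab : ∀ ℓ < L, a ℓ ≤ b ℓ)
    (hw : ∀ ℓ < L, ContinuousOn w (Icc (a ℓ) (b ℓ)))
    (hw0 : ∀ ℓ < L, ∀ x ∈ Icc (a ℓ) (b ℓ), w x ≠ 0) (hP : P.natDegree ≤ N) :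
    ersatz L N d a b w P = sInf (splittingCosts (Finset.range L) (fun ℓ => (b ℓ - a ℓ) / 2) d
      fun ℓ => angularDensity (a ℓ) (b ℓ) w P) := by
  unfold ersatz splittingCosts
  congr 1
  ext r
  simp only [mem_ofPred_eq, Finset.mem_range, funext_iff, Pi.sub_apply]
  constructor
  · rintro ⟨q, hq, y, z, hyz, hpsd, hr⟩
    refine ⟨y, z, fun ℓ hℓ k => ?_, hpsd, hr⟩
    rw [hyz ℓ hℓ, sum_Jent_mul_eq_cosMoment (hab ℓ hℓ) (hw ℓ hℓ) (hw0 ℓ hℓ) (hq ℓ hℓ)]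
  · rintro ⟨y, z, hyz, hpsd, hr⟩
    choose q hq using fun ℓ =>
      exists_eq_sum_C_mul_chebyshevU ((natDegree_transplant_le (a ℓ) (b ℓ) P).trans hP)
    refine ⟨q, fun ℓ _ => hq ℓ, y, z, fun ℓ hℓ k => ?_, hpsd, hr⟩
    rw [hyz ℓ hℓ, sum_Jent_mul_eq_cosMoment (hab ℓ hℓ) (hw ℓ hℓ) (hw0 ℓ hℓ) (hq ℓ)]

end Ersatz

end

theorem ersatz_tendsto_L1_general {L N : ℕ} {a b : ℕ → ℝ} {w : ℝ → ℝ} {P : ℝ[X]}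
    (hab : ∀ ℓ < L, a ℓ ≤ b ℓ) (hw : ∀ ℓ < L, ContinuousOn w (Set.Icc (a ℓ) (b ℓ)))
    (hwpos : ∀ ℓ < L, ∀ x ∈ Set.Icc (a ℓ) (b ℓ), 0 < w x) (hP : P.natDegree ≤ N) :
    Tendsto (fun d => ersatz L N d a b w P) atTop (nhds (L1K L a b w P)) := by
  have hw0 (ℓ : ℕ) (hℓ : ℓ < L) (x : ℝ) (hx : x ∈ Set.Icc (a ℓ) (b ℓ)) : w x ≠ 0 :=
    (hwpos ℓ hℓ x hx).ne'
  have hL1 : L1K L a b w P = ∑ ℓ ∈ Finset.range L,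
      (b ℓ - a ℓ) / 2 * ∫ θ in (0 : ℝ)..Real.pi, |angularDensity (a ℓ) (b ℓ) w P θ| :=
    Finset.sum_congr rfl fun ℓ hℓ => by
      have hℓ := Finset.mem_range.1 hℓ
      rw [half_mul_integral_abs_angularDensity (hab ℓ hℓ) (hw ℓ hℓ) (hwpos ℓ hℓ)]
  simp only [ersatz_eq_sInf_splittingCosts _ hab hw hw0 hP, hL1]
  refine tendsto_sInf_splittingCosts (fun ℓ hℓ => ?_) fun ℓ hℓ => ?_ <;>
    have hℓ := Finset.mem_range.1 hℓ
  · exact div_nonneg (sub_nonneg.2 (hab ℓ hℓ)) zero_le_two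
  · exact (continuous_angularDensity (hab ℓ hℓ) (hw ℓ hℓ) (hw0 ℓ hℓ) P).continuousOn

/-- For `P` of degree at most `N`, the ersatz norms `⫽P⫽_d` converge to `‖P/w‖_{L1(K)}`
as `d → ∞`. -/
theorem ersatz_tendsto_L1
    (L : ℕ) (hL : 0 < L) (a b : ℕ → ℝ)
    (ha0 : a 0 = -1) (hbL : b (L - 1) = 1)
    (hab : ∀ ℓ < L, a ℓ < b ℓ)
    (hgap : ∀ ℓ, ℓ + 1 < L → b ℓ < a (ℓ + 1))
    (w : ℝ → ℝ)
    (hw : ContinuousOn w (⋃ ℓ ∈ Finset.range L, Set.Icc (a ℓ) (b ℓ)))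
    (hwpos : ∀ x ∈ ⋃ ℓ ∈ Finset.range L, Set.Icc (a ℓ) (b ℓ), 0 < w x)
    (N : ℕ) (P : Polynomial ℝ) (hP : P.natDegree ≤ N) :
    Tendsto (fun d => ersatz L N d a b w P) atTop (nhds (L1K L a b w P)) := by
  have hsub (ℓ : ℕ) (hℓ : ℓ < L) := Set.subset_biUnion_of_mem
    (u := fun ℓ => Set.Icc (a ℓ) (b ℓ)) (Finset.mem_coe.2 (Finset.mem_range.2 hℓ))
  exact ersatz_tendsto_L1_general (fun ℓ hℓ => (hab ℓ hℓ).le) (fun ℓ hℓ => hw.mono (hsub ℓ hℓ))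
    (fun ℓ hℓ x hx => hwpos x (hsub ℓ hℓ hx)) hP
end
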